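/- Let 1 < p < ∞ and p* = p/(p−1). Under the standing assumptions on (T, d, μ): if cap_p T > 0, then 1/C ≤ (cap_p T)^{1/p} · (mod_{p*} T)^{1/p*}, where the constant C depends only on the data of T (the constants C_μ, C_P, λ_P). If cap_p T = 0, then mod_{p*} T = ∞. -/

import Mathlib

open MeasureTheory Metric Set Filter Topology
open scoped ENNReal NNReal unitInterval

noncomputable section

namespace Duality

/-! ### Rectifiable curves, line integrals and upper gradients

A rectifiable path is encoded by its arclength-type parametrization: a `1`-Lipschitz
map defined on a compact interval `[a, b]`.  The line integral `∫_γ ρ ds` of a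
nonnegative Borel function is then the Lebesgue integral of `ρ ∘ γ` over `[a, b]`. -/

structure UPath (X : Type*) [PseudoMetricSpace X] where
  a : ℝ
  b : ℝ
  hab : a ≤ b
  toFun : ℝ → X
  lip : LipschitzOnWith 1 toFun (Set.Icc a b)

namespace UPath

variable {X : Type*} [PseudoMetricSpace X]

/-- starting point of the path -/
def start (γ : UPath X) : X := γ.toFun γ.a

/-- end point of the path -/
def finish (γ : UPath X) : X := γ.toFun γ.b

/-- The line integral `∫_γ ρ ds`. -/
def integral (γ : UPath X) (ρ : X → ℝ≥0∞) : ℝ≥0∞ :=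
  ∫⁻ t in Set.Icc γ.a γ.b, ρ (γ.toFun t)

/-- The image (trace) `|γ|` of the path. -/
def trace (γ : UPath X) : Set X := γ.toFun '' Set.Icc γ.a γ.b

/-- The length of the path. -/
def length (γ : UPath X) : ℝ≥0∞ := eVariationOn γ.toFun (Set.Icc γ.a γ.b)

/-- The path stays inside the set `W`. -/
def InSet (γ : UPath X) (W : Set X) : Prop := ∀ t ∈ Set.Icc γ.a γ.b, γ.toFun t ∈ W

/-- The reparametrization of a rectifiable path as a `Path` (continuous map from `[0,1]`). -/
def toPath (γ : UPath X) : Path γ.start γ.finish where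
  toFun := fun t => γ.toFun (γ.a + (t : ℝ) * (γ.b - γ.a))
  continuous_toFun := by
    have hmem : ∀ t : unitInterval, γ.a + (t : ℝ) * (γ.b - γ.a) ∈ Set.Icc γ.a γ.b := by
      intro t
      obtain ⟨ht0, ht1⟩ := t.2
      constructor
      · nlinarith [γ.hab]
      · nlinarith [γ.hab]
    exact γ.lip.continuousOn.comp_continuous (by continuity) hmem
  source' := by simp [start]
  target' := by simp [finish]

end UPath

/-- `ρ` is an upper gradient of `u`. -/
def IsUpperGradient {X : Type*} [PseudoMetricSpace X] {Y : Type*} [PseudoEMetricSpace Y]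
    (u : X → Y) (ρ : X → ℝ≥0∞) : Prop :=
  ∀ γ : UPath X, edist (u γ.start) (u γ.finish) ≤ γ.integral ρ

/-- The `p`-modulus of a family of (rectifiable) paths. -/
def pathMod {X : Type*} [PseudoMetricSpace X] [MeasurableSpace X]
    (μ : Measure X) (p : ℝ) (Γ : Set (UPath X)) : ℝ≥0∞ :=
  ⨅ (ρ : X → ℝ≥0∞) (_ : Measurable ρ ∧ ∀ γ ∈ Γ, 1 ≤ γ.integral ρ),
    ∫⁻ x, ρ x ^ p ∂μ

/-- `ρ` is a `p`-weak upper gradient of `u`: the upper gradient inequality may fail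
only on a path family of zero `p`-modulus. -/
def IsWeakUpperGradient {X : Type*} [PseudoMetricSpace X] [MeasurableSpace X]
    {Y : Type*} [PseudoEMetricSpace Y] (μ : Measure X) (p : ℝ)
    (u : X → Y) (ρ : X → ℝ≥0∞) : Prop :=
  pathMod μ p {γ : UPath X | ¬ edist (u γ.start) (u γ.finish) ≤ γ.integral ρ} = 0

/-- `ρ` is a `p`-weak upper gradient of `u` in the subset `U`. -/
def IsWeakUpperGradientOn {X : Type*} [PseudoMetricSpace X] [MeasurableSpace X]
    {Y : Type*} [PseudoEMetricSpace Y] (μ : Measure X) (p : ℝ) (U : Set X)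
    (u : X → Y) (ρ : X → ℝ≥0∞) : Prop :=
  pathMod (μ.restrict U) p
    {γ : UPath X | γ.InSet U ∧ ¬ edist (u γ.start) (u γ.finish) ≤ γ.integral ρ} = 0

/-- `ρ` is the minimal `p`-weak upper gradient of `u`: it is a `p`-integrable `p`-weak
upper gradient which is `μ`-a.e. dominated by every other one. -/
def IsMinimalWeakUpperGradient {X : Type*} [PseudoMetricSpace X] [MeasurableSpace X]
    {Y : Type*} [PseudoEMetricSpace Y] (μ : Measure X) (p : ℝ)
    (u : X → Y) (ρ : X → ℝ≥0∞) : Prop :=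
  Measurable ρ ∧ IsWeakUpperGradient μ p u ρ ∧ (∫⁻ x, ρ x ^ p ∂μ) < ⊤ ∧
    ∀ ρ' : X → ℝ≥0∞, Measurable ρ' → IsWeakUpperGradient μ p u ρ' →
      (∫⁻ x, ρ' x ^ p ∂μ) < ⊤ → ∀ᵐ x ∂μ, ρ x ≤ ρ' x

/-! ### Doubling measures, Poincaré inequalities, Ahlfors regularity -/

/-- `μ` is a doubling (Borel) measure with doubling constant `Cμ`:
`0 < μ(2B) ≤ Cμ · μ(B) < ∞` for every ball `B` of radius `r < diam T`. -/
def IsDoubling {X : Type*} [MetricSpace X] [MeasurableSpace X]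
    (μ : Measure X) (Cμ : ℝ≥0∞) : Prop :=
  ∀ (x : X) (r : ℝ), 0 < r → r < Metric.diam (Set.univ : Set X) →
    0 < μ (ball x (2 * r)) ∧ μ (ball x (2 * r)) ≤ Cμ * μ (ball x r) ∧
      Cμ * μ (ball x r) < ⊤

/-- `(X, d, μ)` supports a weak `1`-Poincaré inequality with constants `CP`, `lP`:
`⨍_B |u - u_B| dμ ≤ CP · diam B · ⨍_{lP·B} ρ dμ` for every locally integrable `u`
and every upper gradient `ρ` of `u`, and balls have positive finite measure. -/
def SupportsPoincare {X : Type*} [MetricSpace X] [MeasurableSpace X]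
    (μ : Measure X) (CP lP : ℝ) : Prop :=
  (∀ (x : X) (r : ℝ), 0 < r → 0 < μ (ball x r) ∧ μ (ball x r) < ⊤) ∧
  ∀ (u : X → ℝ) (ρ : X → ℝ≥0∞), LocallyIntegrable u μ → Measurable ρ →
    IsUpperGradient u ρ → ∀ (x : X) (r : ℝ), 0 < r →
      (∫⁻ y in ball x r, ENNReal.ofReal |u y - ⨍ z in ball x r, u z ∂μ| ∂μ) /
          μ (ball x r) ≤
        ENNReal.ofReal (CP * Metric.diam (ball x r)) *
          ((∫⁻ y in ball x (lP * r), ρ y ∂μ) / μ (ball x (lP * r)))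

/-- `μ` is Ahlfors `q`-regular with constants `0 < aA ≤ AA`. -/
def IsAhlforsRegular {X : Type*} [MetricSpace X] [MeasurableSpace X]
    (μ : Measure X) (q aA AA : ℝ) : Prop :=
  0 < aA ∧ aA ≤ AA ∧
    ∀ (x : X) (r : ℝ), 0 < r → r < Metric.diam (Set.univ : Set X) →
      ENNReal.ofReal (aA * r ^ q) ≤ μ (ball x r) ∧
        μ (ball x r) ≤ ENNReal.ofReal (AA * r ^ q)

/-! ### The circle `ℝ/ℤ`, loops and degree -/

lemma intCast_coe_eq_zero (k : ℤ) : ((k : ℝ) : UnitAddCircle) = 0 :=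
  (AddCircle.coe_eq_zero_iff _).mpr ⟨k, by simp⟩

/-- The standard loop of degree `k` in `ℝ/ℤ` based at `y`: `t ↦ y + [k t]`. -/
def stdLoop (k : ℤ) (y : UnitAddCircle) : Path y y where
  toFun := fun t => y + (((k : ℝ) * (t : ℝ) : ℝ) : UnitAddCircle)
  continuous_toFun := by
    refine continuous_const.add ?_
    exact (AddCircle.continuous_mk' 1).comp (by continuity)
  source' := by simp
  target' := by
    have h1 : ((1 : unitInterval) : ℝ) = 1 := rfl
    have h : (((k : ℝ) * ((1 : unitInterval) : ℝ) : ℝ) : UnitAddCircle) = 0 := by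
      rw [h1, mul_one]; exact intCast_coe_eq_zero k
    simp [h]

/-- Concatenation of `n` copies of a loop. -/
def loopPow {X : Type*} [TopologicalSpace X] {x : X} (γ : Path x x) : ℕ → Path x x
  | 0 => Path.refl x
  | n + 1 => (loopPow γ n).trans γ

/-- A loop `γ` based at `x` has degree 1 (relative to the chosen generator `α₀` based
at `x₀`) if it is loop-homotopic to a conjugate `η * α₀ * η⁻¹` of `α₀`. -/
def IsDegreeOneLoop {T : Type*} [TopologicalSpace T] (x₀ : T) (α₀ : Path x₀ x₀)
    {x : T} (γ : Path x x) : Prop :=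
  ∃ η : Path x x₀, Path.Homotopic γ (η.trans (α₀.trans η.symm))

/-- A map `f : T → ℝ/ℤ` has degree `k`: it pushes every degree-1 loop based at `x`
to a loop which is loop-homotopic to `[f x] + k·β`, `β (t) = [t]`. -/
def HasDegree {T : Type*} [TopologicalSpace T] (x₀ : T) (α₀ : Path x₀ x₀)
    (f : T → UnitAddCircle) (k : ℤ) : Prop :=
  ∃ hf : Continuous f, ∀ (x : T) (γ : Path x x), IsDegreeOneLoop x₀ α₀ γ →
    Path.Homotopic (γ.map hf) (stdLoop k (f x))

/-- The class of `α₀` generates `π₁(T, x₀) ≅ ℤ`. -/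
def IsGenerator {T : Type*} [TopologicalSpace T] (x₀ : T) (α₀ : Path x₀ x₀) : Prop :=
  Function.Bijective fun k : ℤ =>
    (FundamentalGroup.fromPath (X := TopCat.of T) ⟦α₀⟧ : FundamentalGroup (TopCat.of T) x₀) ^ k

/-- `T` is semilocally simply connected. -/
def SemilocallySimplyConnected (T : Type*) [TopologicalSpace T] : Prop :=
  ∀ x : T, ∃ U ∈ 𝓝 x, ∀ γ : Path x x, (∀ t, γ t ∈ U) → Path.Homotopic γ (Path.refl x)

/-- `f` is a Lipschitz map of degree 1. -/
def DegOneLip {T : Type*} [MetricSpace T] (x₀ : T) (α₀ : Path x₀ x₀)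
    (f : T → UnitAddCircle) : Prop :=
  (∃ L : ℝ≥0, LipschitzWith L f) ∧ HasDegree x₀ α₀ f 1

/-! ### Capacity and surface modulus -/

/-- The degree 1 `p`-capacity of `T`, defined through minimal `p`-weak upper gradients:
the infimum of `∫ ρ^p dμ` over `p`-weak upper gradients `ρ` of Lipschitz degree-1 maps. -/
def cap {T : Type*} [MetricSpace T] [MeasurableSpace T] (μ : Measure T) (p : ℝ)
    (x₀ : T) (α₀ : Path x₀ x₀) : ℝ≥0∞ :=
  ⨅ (f : T → UnitAddCircle) (_ : DegOneLip x₀ α₀ f) (ρ : T → ℝ≥0∞)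
    (_ : Measurable ρ ∧ IsWeakUpperGradient μ p f ρ),
      ∫⁻ x, ρ x ^ p ∂μ

/-- The pointwise Lipschitz constant `Lip f (x)`. -/
def pLip {T : Type*} [MetricSpace T] (f : T → UnitAddCircle) (x : T) : ℝ≥0∞ :=
  Filter.limsup
    (fun r : ℝ => ⨆ y ∈ ball x r, edist (f x) (f y) / ENNReal.ofReal r) (𝓝[>] (0 : ℝ))

/-- The degree 1 `p`-capacity of `T`, defined through pointwise Lipschitz constants. -/
def capLip {T : Type*} [MetricSpace T] [MeasurableSpace T] (μ : Measure T) (p : ℝ)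
    (x₀ : T) (α₀ : Path x₀ x₀) : ℝ≥0∞ :=
  ⨅ (f : T → UnitAddCircle) (_ : DegOneLip x₀ α₀ f), ∫⁻ x, pLip f x ^ p ∂μ

/-- The codimension 1 spherical Hausdorff measure, as a set function:
`H(A) = sup_{δ>0} inf { ∑ μ(B_i)/r_i }`, the infimum being over countable covers of `A`
by balls `B_i` of radii `r_i ≤ δ`. -/
def codimH {T : Type*} [MetricSpace T] [MeasurableSpace T] (μ : Measure T)
    (A : Set T) : ℝ≥0∞ :=
  ⨆ (δ : ℝ) (_ : 0 < δ),
    ⨅ (c : ℕ → T) (r : ℕ → ℝ) (_ : ∀ i, r i ≤ δ)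
      (_ : A ⊆ ⋃ i, ball (c i) (r i)),
        ∑' i, μ (ball (c i) (r i)) / ENNReal.ofReal (r i)

/-- The integral `∫_S g dH` of `g ≥ 0` over `S` against the codimension 1 Hausdorff
measure, via the layer-cake (Choquet) formula. -/
def choquetIntegral {T : Type*} [MetricSpace T] [MeasurableSpace T] (μ : Measure T)
    (S : Set T) (g : T → ℝ≥0∞) : ℝ≥0∞ :=
  ∫⁻ t in Set.Ioi (0 : ℝ), codimH μ {x | x ∈ S ∧ ENNReal.ofReal t < g x}

/-- The family `Γ*` of all level sets `φ⁻¹[0]` of finite codimension 1 Hausdorff measure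
of continuous degree-1 maps `φ : T → ℝ/ℤ`. -/
def Surfaces {T : Type*} [MetricSpace T] [MeasurableSpace T] (μ : Measure T)
    (x₀ : T) (α₀ : Path x₀ x₀) : Set (Set T) :=
  {S | ∃ φ : T → UnitAddCircle, HasDegree x₀ α₀ φ 1 ∧ S = φ ⁻¹' {0} ∧ codimH μ S < ⊤}

/-- The surface `q`-modulus of a family of surfaces, the surfaces being equipped with the
codimension 1 Hausdorff measure. -/
def surfModOf {T : Type*} [MetricSpace T] [MeasurableSpace T] (μ : Measure T) (q : ℝ)
    (𝒮 : Set (Set T)) : ℝ≥0∞ :=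
  ⨅ (ρ : T → ℝ≥0∞) (_ : Measurable ρ ∧ ∀ S ∈ 𝒮, 1 ≤ choquetIntegral μ S ρ),
    ∫⁻ x, ρ x ^ q ∂μ

/-- The surface modulus `mod_q T`. -/
def surfMod {T : Type*} [MetricSpace T] [MeasurableSpace T] (μ : Measure T) (q : ℝ)
    (x₀ : T) (α₀ : Path x₀ x₀) : ℝ≥0∞ :=
  surfModOf μ q (Surfaces μ x₀ α₀)

/-- The family `Γ*` with the `(q-1)`-dimensional Hausdorff measure instead. -/
def SurfacesH {T : Type*} [MetricSpace T] [MeasurableSpace T] [BorelSpace T] (q : ℝ)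
    (x₀ : T) (α₀ : Path x₀ x₀) : Set (Set T) :=
  {S | ∃ φ : T → UnitAddCircle, HasDegree x₀ α₀ φ 1 ∧ S = φ ⁻¹' {0} ∧ μH[q - 1] S < ⊤}

/-- The surface modulus `mod_q T` defined through the `(q-1)`-dimensional Hausdorff
measures `H^{q-1} ⌞ S`, `S ∈ Γ*`. -/
def surfModH {T : Type*} [MetricSpace T] [MeasurableSpace T] [BorelSpace T]
    (μ : Measure T) (q pstar : ℝ) (x₀ : T) (α₀ : Path x₀ x₀) : ℝ≥0∞ :=
  ⨅ (ρ : T → ℝ≥0∞)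
    (_ : Measurable ρ ∧ ∀ S ∈ SurfacesH (T := T) q x₀ α₀, 1 ≤ ∫⁻ x in S, ρ x ∂μH[q - 1]),
      ∫⁻ x, ρ x ^ pstar ∂μ

/-- The standing assumptions 2.1. -/
def Standing {T : Type*} [MetricSpace T] [MeasurableSpace T] (μ : Measure T)
    (Cμ : ℝ≥0∞) (CP lP : ℝ) (x₀ : T) (α₀ : Path x₀ x₀) : Prop :=
  IsDoubling μ Cμ ∧ SupportsPoincare μ CP lP ∧ SemilocallySimplyConnected T ∧
    IsGenerator x₀ α₀ ∧ ∃ f : T → UnitAddCircle, DegOneLip x₀ α₀ f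

/-! ### The universal cover -/

/-- `π` is a local isometry. -/
def IsLocalIsometry {X Y : Type*} [MetricSpace X] [MetricSpace Y] (π : X → Y) : Prop :=
  ∀ x : X, ∃ ε : ℝ, 0 < ε ∧
    ∀ y ∈ ball x ε, ∀ z ∈ ball x ε, dist (π y) (π z) = dist y z

/-- `(T̃, π)` is the universal cover of `T`, with `T̃` carrying the length metric pulled
back by `π` (so that `π` is a local isometry). -/
def CoverSetup {T Tt : Type*} [MetricSpace T] [MetricSpace Tt] (π : Tt → T) : Prop :=
  IsCoveringMap π ∧ Function.Surjective π ∧ IsLocalIsometry π ∧ SimplyConnectedSpace Tt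

/-- `τ` is the deck transformation of the cover `π` determined by
`τ (γ̃ 0) = γ̃ 1` for every lift `γ̃` of every degree-1 loop `γ`. -/
def IsDeck {T Tt : Type*} [MetricSpace T] [MetricSpace Tt] (π : Tt → T)
    (x₀ : T) (α₀ : Path x₀ x₀) (τ : Tt → Tt) : Prop :=
  Continuous τ ∧ (∀ x, π (τ x) = π x) ∧
    ∀ (x : T) (γ : Path x x), IsDegreeOneLoop x₀ α₀ γ →
      ∀ γt : C(unitInterval, Tt), (∀ t, π (γt t) = γ t) → τ (γt 0) = γt 1

/-- `μ̃` is the natural lift of `μ` to the cover: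
`μ̃ (A) = ∫ #(π⁻¹(x) ∩ A) dμ (x)`. -/
def IsLiftedMeasure {T Tt : Type*} [MetricSpace T] [MeasurableSpace T]
    [MetricSpace Tt] [MeasurableSpace Tt] (π : Tt → T) (μ : Measure T)
    (μt : Measure Tt) : Prop :=
  ∀ A : Set Tt, MeasurableSet A → μt A = ∫⁻ x, ((π ⁻¹' {x} ∩ A).encard : ℝ≥0∞) ∂μ

/-! ### Newtonian spaces -/

/-- The seminorm of `N^{1,p}(U)`. -/
def NSeminorm {X : Type*} [PseudoMetricSpace X] [MeasurableSpace X] (μ : Measure X)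
    (p : ℝ) (U : Set X) (f : X → ℝ) : ℝ≥0∞ :=
  (∫⁻ x in U, ENNReal.ofReal |f x| ^ p ∂μ) ^ (1 / p) +
    ⨅ (ρ : X → ℝ≥0∞) (_ : Measurable ρ ∧ IsWeakUpperGradientOn μ p U f ρ),
      (∫⁻ x in U, ρ x ^ p ∂μ) ^ (1 / p)

/-- `f ∈ N^{1,p}_loc`. -/
def MemNloc {X : Type*} [PseudoMetricSpace X] [MeasurableSpace X] (μ : Measure X)
    (p : ℝ) (f : X → ℝ) : Prop :=
  ∀ U : Set X, IsOpen U → IsCompact (closure U) →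
    (∫⁻ x in U, ENNReal.ofReal |f x| ^ p ∂μ) < ⊤ ∧
      ∃ ρ : X → ℝ≥0∞, Measurable ρ ∧ IsWeakUpperGradientOn μ p U f ρ ∧
        (∫⁻ x in U, ρ x ^ p ∂μ) < ⊤

/-- The collection `F`: nonnegative Borel functions `ρ` on `T` such that `ρ ∘ π` is a
`p`-weak upper gradient of some `f ∈ N^{1,p}_loc (T̃)` with `f ∘ τ - f = 1` a.e. -/
def MemF {T Tt : Type*} [MetricSpace T] [MeasurableSpace T] [MetricSpace Tt]
    [MeasurableSpace Tt] (π : Tt → T) (τ : Tt → Tt) (μt : Measure Tt) (p : ℝ)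
    (ρ : T → ℝ≥0∞) : Prop :=
  Measurable ρ ∧ ∃ f : Tt → ℝ, MemNloc μt p f ∧ (∀ᵐ x ∂μt, f (τ x) - f x = 1) ∧
    IsWeakUpperGradient μt p f (ρ ∘ π)

/-- The capacity `cap_p^F T`. -/
def capF {T Tt : Type*} [MetricSpace T] [MeasurableSpace T] [MetricSpace Tt]
    [MeasurableSpace Tt] (μ : Measure T) (π : Tt → T) (τ : Tt → Tt) (μt : Measure Tt)
    (p : ℝ) : ℝ≥0∞ :=
  ⨅ (ρ : T → ℝ≥0∞) (_ : MemF π τ μt p ρ), ∫⁻ x, ρ x ^ p ∂μ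

/-! ### Miscellaneous operators -/

/-- The restricted Hardy–Littlewood maximal operator `M_R`. -/
def restrMax {T : Type*} [MetricSpace T] [MeasurableSpace T] (μ : Measure T)
    (R : ℝ≥0∞) (g : T → ℝ≥0∞) (x : T) : ℝ≥0∞ :=
  ⨆ (s : ℝ) (_ : 0 < s ∧ ENNReal.ofReal s ≤ R),
    (∫⁻ y in ball x s, g y ∂μ) / μ (ball x s)

/-- The upper Lebesgue integral. -/
def upperLintegral {Y : Type*} [MeasurableSpace Y] (ν : Measure Y)
    (F : Y → ℝ≥0∞) : ℝ≥0∞ :=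
  ⨅ (G : Y → ℝ≥0∞) (_ : Measurable G ∧ ∀ y, F y ≤ G y), ∫⁻ y, G y ∂ν

/-! ### The sets `Ω` and the functions `ψ̃`, `ζ`, `ψ` of Section 4.3 -/

/-- The set of points reachable from `A` by a rectifiable path inside `W`. -/
def reach {T : Type*} [MetricSpace T] (A W : Set T) : Set T :=
  {x | ∃ γ : UPath T, γ.start ∈ A ∧ γ.finish = x ∧ γ.InSet W}

/-- `inf_γ ∫_γ ρ ds` over rectifiable paths connecting `A` to `x` inside `W`. -/
def pathDist {T : Type*} [MetricSpace T] (ρ : T → ℝ≥0∞) (A W : Set T) (x : T) : ℝ≥0∞ :=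
  ⨅ (γ : UPath T) (_ : γ.start ∈ A ∧ γ.finish = x ∧ γ.InSet W), γ.integral ρ

open scoped Classical in
/-- The function `ψ̃`. -/
def psiTilde {T : Type*} [MetricSpace T] (ρ : T → ℝ≥0∞) (A W : Set T) (x : T) : ℝ :=
  if x ∈ reach A W then (pathDist ρ A W x).toReal else 0

/-- The function `min {1, ψ̃}`. -/
def zeta {T : Type*} [MetricSpace T] (ρ : T → ℝ≥0∞) (A W : Set T) (x : T) : ℝ :=
  min 1 (psiTilde ρ A W x)

/-- The competing admissible map `ψ = [min {1, ψ̃}] : T → ℝ/ℤ`. -/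
def psiMap {T : Type*} [MetricSpace T] (ρ : T → ℝ≥0∞) (A W : Set T) (x : T) :
    UnitAddCircle :=
  ((zeta ρ A W x : ℝ) : UnitAddCircle)

end Duality

namespace Duality

/-- The quantitative part of the standing assumptions, with normalized constants: balls have
positive finite measure, doubling at all scales, and the Poincaré inequality for continuous
functions. -/
structure DoublingPoincare {T : Type*} [MetricSpace T] [MeasurableSpace T]
    (μ : Measure T) (c P : ℝ≥0) (lP : ℝ) : Prop where
  pos : ∀ (x : T) (r : ℝ), 0 < r → 0 < μ (ball x r)
  doubling : ∀ (x : T) (r : ℝ), 0 < r → μ (ball x (2 * r)) ≤ c * μ (ball x r)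
  poincare : ∀ (u : T → ℝ) (ρ : T → ℝ≥0∞), Continuous u → Measurable ρ →
    IsUpperGradient u ρ → ∀ (x : T) (r : ℝ), 0 < r →
      (∫⁻ y in ball x r, ENNReal.ofReal |u y - ⨍ z in ball x r, u z ∂μ| ∂μ) / μ (ball x r) ≤
        ENNReal.ofReal (2 * P * r) *
          ((∫⁻ y in ball x (lP * r), ρ y ∂μ) / μ (ball x (lP * r)))

section Telescoping

variable {T : Type*} [MetricSpace T] [MeasurableSpace T] [BorelSpace T] [CompactSpace T]
  {μ : Measure T} [IsFiniteMeasure μ] {c P : ℝ≥0} {lP : ℝ}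

lemma enorm_setAverage_sub_le {u : T → ℝ} (hu : Continuous u) {B : Set T}
    (hB : μ B ≠ 0) (a : ℝ) :
    ‖(⨍ y in B, u y ∂μ) - a‖ₑ ≤ (∫⁻ y in B, ENNReal.ofReal |u y - a| ∂μ) / μ B := by
  have hint : Integrable u (μ.restrict B) :=
    (hu.integrable_of_hasCompactSupport (HasCompactSupport.of_compactSpace u)).restrict
  have hfin : μ B ≠ ⊤ := measure_ne_top μ B
  have hne : μ.real B ≠ 0 := (ENNReal.toReal_ne_zero).2 ⟨hB, hfin⟩
  have h1 : (⨍ y in B, u y ∂μ) - a = (μ.real B)⁻¹ * ∫ y in B, (u y - a) ∂μ := by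
    rw [setAverage_eq, integral_sub hint (integrable_const a)]
    simp only [smul_eq_mul, setIntegral_const]
    field_simp
  rw [h1, enorm_mul, ENNReal.div_eq_inv_mul]
  gcongr
  · rw [Measure.real, ← ENNReal.toReal_inv, Real.enorm_eq_ofReal ENNReal.toReal_nonneg]
    exact ENNReal.ofReal_toReal_le
  · refine (enorm_integral_le_lintegral_enorm _).trans_eq ?_
    simp_rw [Real.enorm_eq_ofReal_abs]

lemma DoublingPoincare.abs_average_sub_average_le (h : DoublingPoincare μ c P lP)
    {u : T → ℝ} {ρ : T → ℝ≥0∞} (hu : Continuous u) (hρ : Measurable ρ)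
    (hg : IsUpperGradient u ρ) {z z' : T} {s s' : ℝ} (hs : 0 < s) (hs' : 0 < s')
    (hsub : ball z' s' ⊆ ball z s) {D m : ℝ≥0} (hD : μ (ball z s) ≤ D * μ (ball z' s'))
    (hm : (∫⁻ y in ball z (lP * s), ρ y ∂μ) / μ (ball z (lP * s)) ≤ m) :
    |(⨍ y in ball z' s', u y ∂μ) - ⨍ y in ball z s, u y ∂μ| ≤ D * (2 * P * s) * m := by
  set a := ⨍ y in ball z s, u y ∂μ with ha
  have hpos := h.pos z s hs
  have hpos' := h.pos z' s' hs'
  have h2 : ‖(⨍ y in ball z' s', u y ∂μ) - a‖ₑ ≤ D * (ENNReal.ofReal (2 * P * s) * m) := by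
    calc ‖(⨍ y in ball z' s', u y ∂μ) - a‖ₑ
        ≤ (∫⁻ y in ball z' s', ENNReal.ofReal |u y - a| ∂μ) / μ (ball z' s') :=
          enorm_setAverage_sub_le hu hpos'.ne' a
      _ ≤ (∫⁻ y in ball z s, ENNReal.ofReal |u y - a| ∂μ) / μ (ball z' s') := by
          gcongr
      _ ≤ D * ((∫⁻ y in ball z s, ENNReal.ofReal |u y - a| ∂μ) / μ (ball z s)) := by
          rw [div_eq_mul_inv, div_eq_mul_inv, mul_left_comm]
          gcongr
          rw [ENNReal.inv_le_iff_inv_le, ENNReal.mul_inv, inv_inv]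
          · rw [mul_comm, ← div_eq_mul_inv]
            exact ENNReal.div_le_of_le_mul' hD
          · right; simp [hpos.ne']
          · right; simp
      _ ≤ D * (ENNReal.ofReal (2 * P * s) * m) := by
          gcongr
          exact (h.poincare u ρ hu hρ hg z s hs).trans (by gcongr)
  have h3 : (D : ℝ≥0∞) * (ENNReal.ofReal (2 * P * s) * m) =
      ENNReal.ofReal (D * (2 * P * s) * m) := by
    rw [← mul_assoc (D : ℝ≥0∞), ENNReal.ofReal_mul (p := D * (2 * P * s)) (by positivity),
      ENNReal.ofReal_mul D.coe_nonneg, ENNReal.ofReal_coe_nnreal, ENNReal.ofReal_coe_nnreal]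
  rw [h3, Real.enorm_eq_ofReal_abs, ENNReal.ofReal_le_ofReal_iff (by positivity)] at h2
  exact h2

lemma DoublingPoincare.abs_average_sub_average_two_pow_le (h : DoublingPoincare μ c P lP)
    {u : T → ℝ} {ρ : T → ℝ≥0∞} (hu : Continuous u) (hρ : Measurable ρ)
    (hg : IsUpperGradient u ρ) {z : T} {s : ℝ} (hs : 0 < s) {m : ℝ≥0} (n : ℕ)
    (hm : ∀ k ≤ n, (∫⁻ y in ball z (lP * (2 ^ k * s)), ρ y ∂μ) / μ (ball z (lP * (2 ^ k * s)))
      ≤ m) :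
    |(⨍ y in ball z s, u y ∂μ) - ⨍ y in ball z (2 ^ n * s), u y ∂μ| ≤
      4 * c * P * m * (2 ^ n * s) := by
  induction n with
  | zero => simp; positivity
  | succ n ih =>
    have h1 := ih fun k hk => hm k (hk.trans n.le_succ)
    have hs' : 0 < 2 ^ n * s := by positivity
    have h2 := h.abs_average_sub_average_le hu hρ hg (z := z) (z' := z) (s := 2 ^ (n + 1) * s)
      (s' := 2 ^ n * s) (by positivity) hs' (D := c)
      (ball_subset_ball (by rw [pow_succ]; linarith))
      (by
        have := h.doubling z _ hs'
        rwa [← mul_assoc, ← pow_succ'] at this) (hm (n + 1) le_rfl)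
    have h3 := abs_sub_le (⨍ y in ball z s, u y ∂μ) (⨍ y in ball z (2 ^ n * s), u y ∂μ)
      (⨍ y in ball z (2 ^ (n + 1) * s), u y ∂μ)
    refine h3.trans ((add_le_add h1 h2).trans_eq ?_)
    ring

lemma abs_average_sub_le_of_lipschitz {u : T → ℝ} {L : ℝ≥0} (hu : LipschitzWith L u) {z : T}
    {s : ℝ} (hpos : 0 < μ (ball z s)) :
    |(⨍ y in ball z s, u y ∂μ) - u z| ≤ L * s := by
  have hs : 0 ≤ s := by
    by_contra! hs
    simp [ball_eq_empty.2 hs.le] at hpos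
  have h1 := enorm_setAverage_sub_le (μ := μ) hu.continuous hpos.ne' (u z)
  have h2 : (∫⁻ y in ball z s, ENNReal.ofReal |u y - u z| ∂μ) ≤
      ∫⁻ y in ball z s, ENNReal.ofReal (L * s) ∂μ := by
    refine setLIntegral_mono measurable_const fun y hy => ENNReal.ofReal_le_ofReal ?_
    rw [← Real.dist_eq]
    exact (hu.dist_le_mul y z).trans (by gcongr; exact (mem_ball.1 hy).le)
  have h3 := h1.trans (ENNReal.div_le_div_right h2 _)
  rw [setLIntegral_const, mul_div_assoc, ENNReal.div_self hpos.ne' (measure_ne_top _ _), mul_one,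
    Real.enorm_eq_ofReal_abs, ENNReal.ofReal_le_ofReal_iff (by positivity)] at h3
  exact h3

/-- Oscillation bound at scale `2 ^ N * s` for a Lipschitz function, in terms of averages of an
upper gradient over balls whose radii are at least a fixed multiple of `s`. -/
lemma DoublingPoincare.abs_sub_le (h : DoublingPoincare μ c P lP)
    {u : T → ℝ} {ρ : T → ℝ≥0∞} {L : ℝ≥0} (hu : LipschitzWith L u) (hρ : Measurable ρ)
    (hg : IsUpperGradient u ρ) {x y : T} {s : ℝ} (hs : 0 < s) {m : ℝ≥0} (N : ℕ)
    (hxy : dist y x < 2 ^ N * s)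
    (hm : ∀ z, dist z x < 2 ^ N * s → ∀ k ≤ N + 1,
      (∫⁻ y in ball z (lP * (2 ^ k * s)), ρ y ∂μ) / μ (ball z (lP * (2 ^ k * s))) ≤ m) :
    |u y - u x| ≤ 2 * L * s + (12 * c * P + 4 * c ^ 2 * P) * m * (2 ^ N * s) := by
  have hR : 0 < 2 ^ N * s := by positivity
  have hx1 := abs_average_sub_le_of_lipschitz (μ := μ) hu (h.pos x s hs)
  have hy1 := abs_average_sub_le_of_lipschitz (μ := μ) hu (h.pos y s hs)
  have hx2 := h.abs_average_sub_average_two_pow_le hu.continuous hρ hg hs (z := x) N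
    fun k hk => hm x (by simpa using hR) k (hk.trans N.le_succ)
  have hy2 := h.abs_average_sub_average_two_pow_le hu.continuous hρ hg hs (z := y) (N + 1)
    fun k hk => hm y hxy k hk
  have hxy2 := h.abs_average_sub_average_le hu.continuous hρ hg (z' := x) (z := y)
    (s' := 2 ^ N * s) (s := 2 ^ (N + 1) * s) (by positivity) hR (D := c ^ 2)
    (ball_subset_ball' (by rw [pow_succ, dist_comm]; linarith))
    (by
      calc μ (ball y (2 ^ (N + 1) * s)) ≤ μ (ball x (2 * (2 * (2 ^ N * s)))) := by
            refine measure_mono (ball_subset_ball' ?_)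
            rw [pow_succ]; linarith
        _ ≤ c * μ (ball x (2 * (2 ^ N * s))) := h.doubling _ _ (by positivity)
        _ ≤ c * (c * μ (ball x (2 ^ N * s))) := by gcongr; exact h.doubling _ _ hR
        _ = _ := by push_cast; ring) (hm y hxy (N + 1) le_rfl)
  rw [pow_succ] at hy2 hxy2
  push_cast at hxy2
  rw [abs_le] at *
  constructor <;> nlinarith

end Telescoping

section Lebesgue

variable {T : Type*} [MetricSpace T] [MeasurableSpace T] {μ : Measure T} {c P : ℝ≥0} {lP : ℝ}

lemma DoublingPoincare.measure_closedBall_two_mul_le (h : DoublingPoincare μ c P lP) (x : T)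
    {r : ℝ} (hr : 0 < r) : μ (closedBall x (2 * r)) ≤ (c ^ 2 : ℝ≥0) * μ (closedBall x r) := by
  calc μ (closedBall x (2 * r)) ≤ μ (ball x (2 * (2 * r))) :=
        measure_mono (closedBall_subset_ball (by linarith))
    _ ≤ c * μ (ball x (2 * r)) := h.doubling _ _ (by positivity)
    _ ≤ c * (c * μ (ball x r)) := by gcongr; exact h.doubling _ _ hr
    _ = (c ^ 2 : ℝ≥0) * μ (ball x r) := by push_cast; ring
    _ ≤ _ := by gcongr; exact ball_subset_closedBall

lemma DoublingPoincare.average_ball_le [IsFiniteMeasure μ] (h : DoublingPoincare μ c P lP)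
    {ρ : T → ℝ≥0∞} (z : T) {s : ℝ} (hs : 0 < s) :
    (∫⁻ y in ball z s, ρ y ∂μ) / μ (ball z s) ≤
      c * ((∫⁻ y in closedBall z s, ρ y ∂μ) / μ (closedBall z s)) := by
  have hpos := h.pos z s hs
  rw [div_eq_mul_inv, div_eq_mul_inv, mul_left_comm]
  gcongr
  · exact ball_subset_closedBall
  · rw [ENNReal.inv_le_iff_inv_le, ENNReal.mul_inv, inv_inv]
    · rw [mul_comm, ← div_eq_mul_inv]
      refine ENNReal.div_le_of_le_mul' (le_trans ?_ (h.doubling z s hs))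
      exact measure_mono (closedBall_subset_ball (by linarith))
    · right
      simpa using (hpos.trans_le (measure_mono ball_subset_closedBall)).ne'
    · right
      simp

lemma DoublingPoincare.isUnifLocDoublingMeasure (h : DoublingPoincare μ c P lP) :
    IsUnifLocDoublingMeasure μ :=
  ⟨c ^ 2, eventually_mem_nhdsWithin.mono fun _ hr x => h.measure_closedBall_two_mul_le x hr⟩

variable [BorelSpace T] [CompactSpace T] [IsFiniteMeasure μ]

/-- Lebesgue differentiation along possibly off-centred closed balls. -/
lemma DoublingPoincare.ae_average_mem_Icc (h : DoublingPoincare μ c P lP) {ρ : T → ℝ≥0∞}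
    (hρ : Measurable ρ) (hfin : ∫⁻ x, ρ x ∂μ ≠ ⊤) :
    ∀ᵐ x ∂μ, ρ x ≠ ⊤ ∧ ∀ (K : ℕ) (η : ℝ≥0), 0 < η → ∃ δ > (0 : ℝ), ∀ (z : T) (s : ℝ), 0 < s →
      s ≤ δ → dist x z ≤ K * s →
        (∫⁻ y in closedBall z s, ρ y ∂μ) / μ (closedBall z s) ∈ Icc (ρ x - η) (ρ x + η) := by
  have := h.isUnifLocDoublingMeasure
  have h1 : ∀ᵐ x ∂μ, ∀ K : ℕ, Tendsto (fun a => (∫⁻ y in a, ρ y ∂μ) / μ a)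
      ((IsUnifLocDoublingMeasure.vitaliFamily μ (K : ℝ)).filterAt x) (𝓝 (ρ x)) :=
    ae_all_iff.2 fun K => VitaliFamily.ae_tendsto_lintegral_div _ hρ.aemeasurable hfin
  filter_upwards [h1, ae_lt_top hρ hfin] with x hx hxtop
  refine ⟨hxtop.ne, fun K η hη => ?_⟩
  have h2 := (ENNReal.tendsto_nhds hxtop.ne).1 (hx K) η (by exact_mod_cast hη)
  obtain ⟨ε, hε, h3⟩ := (VitaliFamily.eventually_filterAt_iff _).1 h2
  refine ⟨ε / (K + 1), by positivity, fun z s hs hsδ hd => h3 _ ?_ ?_⟩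
  · exact IsUnifLocDoublingMeasure.closedBall_mem_vitaliFamily_of_dist_le_mul μ hd hs
  · refine closedBall_subset_closedBall' ?_
    rw [le_div_iff₀ (by positivity)] at hsδ
    rw [dist_comm]
    linarith

/-- The constant relating pointwise oscillation and upper gradients. -/
def oscConst (c P : ℝ≥0) : ℝ≥0 := 1 + 2 * ((12 * c * P + 4 * c ^ 2 * P) * c)

/-- At almost every point, the oscillation of a Lipschitz map on small balls is controlled by the
averages of any upper gradient (a form of Cheeger's theorem). -/
lemma DoublingPoincare.ae_oscillation_le (h : DoublingPoincare μ c P lP) {Y : Type*}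
    [MetricSpace Y] {f : T → Y} {L : ℝ≥0} (hf : LipschitzWith L f) {ρ : T → ℝ≥0∞}
    (hρ : Measurable ρ) (hg : IsUpperGradient f ρ) (hfin : ∫⁻ x, ρ x ∂μ ≠ ⊤) :
    ∀ᵐ x ∂μ, ∀ η : ℝ≥0, 0 < η → ∃ r₀ > (0 : ℝ), ∀ r, 0 < r → r ≤ r₀ → ∃ M : ℝ≥0,
      (∀ y ∈ ball x (6 * r), dist (f y) (f x) ≤ M * (6 * r)) ∧
        M * μ (closedBall x r) ≤ ∫⁻ y in closedBall x r, oscConst c P * (ρ y + η) ∂μ := by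
  filter_upwards [h.ae_average_mem_Icc hρ hfin] with x ⟨hxtop, hx⟩ η hη
  set C₀ : ℝ≥0 := 12 * c * P + 4 * c ^ 2 * P with hC₀
  set m : ℝ≥0 := c * ((ρ x).toNNReal + η) with hm
  obtain ⟨N, hN⟩ : ∃ N : ℕ, 2 * (L : ℝ) / η < 2 ^ N :=
    pow_unbounded_of_one_lt _ one_lt_two
  rw [div_lt_iff₀ (by exact_mod_cast hη)] at hN
  obtain ⟨K, hK⟩ : ∃ K : ℕ, 2 ^ N / |lP| ≤ K := exists_nat_ge _
  obtain ⟨δ, hδ, hδ'⟩ := hx K η hη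
  obtain ⟨δ₁, hδ₁, hδ₁'⟩ := hx 0 η hη
  refine ⟨min δ₁ (δ / (12 * (|lP| + 1))), by positivity, fun r hr hr₀ => ?_⟩
  have hrδ₁ : r ≤ δ₁ := hr₀.trans (min_le_left _ _)
  have hrδ : r ≤ δ / (12 * (|lP| + 1)) := hr₀.trans (min_le_right _ _)
  rw [le_div_iff₀ (by positivity)] at hrδ
  refine ⟨η + C₀ * m, fun y hy => ?_, ?_⟩
  · set s : ℝ := 6 * r / 2 ^ N with hs
    have hs0 : 0 < s := by positivity
    have hNs : 2 ^ N * s = 6 * r := by rw [hs]; field_simp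
    have hu : LipschitzWith L fun z => dist (f z) (f x) :=
      LipschitzWith.of_dist_le_mul fun a b => by
        rw [Real.dist_eq]
        exact (abs_dist_sub_le _ _ _).trans (hf.dist_le_mul a b)
    have hgu : IsUpperGradient (fun z => dist (f z) (f x)) ρ := fun γ => by
      refine le_trans ?_ (hg γ)
      rw [edist_dist, edist_dist, Real.dist_eq]
      exact ENNReal.ofReal_le_ofReal (abs_dist_sub_le _ _ _)
    have hosc := h.abs_sub_le hu hρ hgu (x := x) (y := y) hs0 (m := m) N
      (by rw [hNs]; exact hy) (by
        intro z hz k hk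
        rcases le_or_gt lP 0 with hl | hl
        · have : ball z (lP * (2 ^ k * s)) = ∅ :=
            ball_eq_empty.2 (mul_nonpos_of_nonpos_of_nonneg hl (by positivity))
          simp [this]
        · rw [abs_of_pos hl] at hK hrδ
          have hk1 : (1 : ℝ) ≤ 2 ^ k := one_le_pow₀ one_le_two
          have hk2 : (2 : ℝ) ^ k ≤ 2 ^ (N + 1) := pow_le_pow_right₀ one_le_two hk
          have hks : 2 ^ k * s ≤ 12 * r := by
            have : 2 ^ k * s ≤ 2 ^ (N + 1) * s := by gcongr
            rw [pow_succ] at this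
            linarith
          have hrad : 0 < lP * (2 ^ k * s) := by positivity
          refine (h.average_ball_le z hrad).trans ?_
          rw [hm]
          push_cast
          rw [ENNReal.coe_toNNReal hxtop]
          gcongr
          refine (hδ' z _ hrad ?_ ?_).2
          · calc lP * (2 ^ k * s) ≤ lP * (12 * r) := by gcongr
              _ ≤ δ := by nlinarith
          · rw [div_le_iff₀ hl] at hK
            calc dist x z ≤ 2 ^ N * s := by rw [dist_comm]; exact hz.le
              _ ≤ K * lP * (1 * s) := by rw [one_mul]; gcongr
              _ ≤ K * lP * (2 ^ k * s) := by gcongr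
              _ = _ := by ring)
    rw [dist_self, sub_zero, abs_of_nonneg dist_nonneg, hNs] at hosc
    refine hosc.trans ?_
    have : 2 * L * s ≤ η * (6 * r) := by
      calc 2 * L * s ≤ 2 ^ N * η * s := by gcongr
        _ = η * (6 * r) := by rw [← hNs]; ring
    rw [hC₀]
    push_cast
    linarith
  · have h1 := (hδ₁' x r hr hrδ₁ (by simp)).1
    have hpos : 0 < μ (closedBall x r) :=
      (h.pos x r hr).trans_le (measure_mono ball_subset_closedBall)
    have h2 : ρ x * μ (closedBall x r) ≤
        (∫⁻ y in closedBall x r, ρ y ∂μ) + η * μ (closedBall x r) := by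
      rw [tsub_le_iff_right] at h1
      calc ρ x * μ (closedBall x r)
          ≤ ((∫⁻ y in closedBall x r, ρ y ∂μ) / μ (closedBall x r) + η) * μ (closedBall x r) := by
            gcongr
        _ = _ := by rw [add_mul, ENNReal.div_mul_cancel hpos.ne' (measure_ne_top _ _)]
    rw [lintegral_const_mul _ (hρ.add_const _), lintegral_add_right _ measurable_const,
      setLIntegral_const, hm]
    push_cast
    rw [ENNReal.coe_toNNReal hxtop, oscConst]
    push_cast
    set J := ∫⁻ y in closedBall x r, ρ y ∂μ
    set v := μ (closedBall x r)
    have hC₀' : (12 * c * P + 4 * c ^ 2 * P : ℝ≥0∞) = C₀ := by rw [hC₀]; push_cast; rfl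
    rw [hC₀']
    calc ((η : ℝ≥0∞) + C₀ * (c * (ρ x + η))) * v
        = η * v + C₀ * c * (ρ x * v) + C₀ * c * (η * v) := by ring
      _ ≤ η * v + C₀ * c * (J + η * v) + C₀ * c * (η * v) := by gcongr
      _ ≤ (η * v + C₀ * c * (J + η * v) + C₀ * c * (η * v)) + (J + C₀ * c * J) := le_self_add
      _ = (1 + 2 * (C₀ * c)) * (J + η * v) := by ring

end Lebesgue

section Eilenberg

variable {T : Type*} [MetricSpace T] [MeasurableSpace T]

/-- The premeasure at scale `δ` in the definition of `codimH`. -/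
def codimPre (μ : Measure T) (δ : ℝ) (A : Set T) : ℝ≥0∞ :=
  ⨅ (c : ℕ → T) (r : ℕ → ℝ) (_ : ∀ i, r i ≤ δ) (_ : A ⊆ ⋃ i, ball (c i) (r i)),
    ∑' i, μ (ball (c i) (r i)) / ENNReal.ofReal (r i)

lemma codimPre_anti (μ : Measure T) {δ δ' : ℝ} (h : δ ≤ δ') (A : Set T) :
    codimPre μ δ' A ≤ codimPre μ δ A := by
  refine le_iInf₂ fun c r => le_iInf₂ fun hr hA => ?_
  exact (iInf₂_le c r).trans (iInf₂_le (fun i => (hr i).trans h) hA)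

lemma codimPre_le_tsum [Nonempty T] (μ : Measure T) {δ : ℝ} (hδ : 0 ≤ δ) {A : Set T} {ι : Type*}
    [Countable ι] (c : ι → T) (r : ι → ℝ) (hr : ∀ i, r i ≤ δ) (hA : A ⊆ ⋃ i, ball (c i) (r i)) :
    codimPre μ δ A ≤ ∑' i, μ (ball (c i) (r i)) / ENNReal.ofReal (r i) := by
  obtain ⟨e, he⟩ := exists_injective_nat ι
  set c' : ℕ → T := Function.extend e c fun _ => Classical.arbitrary T
  set r' : ℕ → ℝ := Function.extend e r 0
  have hc' : ∀ i, c' (e i) = c i := he.extend_apply _ _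
  have hr' : ∀ i, r' (e i) = r i := he.extend_apply _ _
  have hr0 : ∀ n, n ∉ range e → r' n = 0 := fun n hn => Function.extend_apply' _ _ _ hn
  refine (iInf₂_le c' r').trans ((iInf₂_le (fun n => ?_) fun x hx => ?_).trans_eq ?_)
  · by_cases hn : n ∈ range e
    · obtain ⟨i, rfl⟩ := hn
      exact (hr' i).trans_le (hr i)
    · exact (hr0 n hn).trans_le hδ
  · obtain ⟨i, hi⟩ := mem_iUnion.1 (hA hx)
    exact mem_iUnion.2 ⟨e i, by rwa [hc', hr']⟩
  · rw [← tsum_extend_zero he]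
    congr with n
    by_cases hn : n ∈ range e
    · obtain ⟨i, rfl⟩ := hn
      rw [hc', hr', he.extend_apply]
    · rw [hr0 n hn, Function.extend_apply' _ _ _ hn]
      simp

lemma DoublingPoincare.measure_ball_six_mul_le {μ : Measure T} {c P : ℝ≥0} {lP : ℝ}
    (h : DoublingPoincare μ c P lP) (x : T) {r : ℝ} (hr : 0 < r) :
    μ (ball x (6 * r)) ≤ (c : ℝ≥0∞) ^ 3 * μ (closedBall x r) := by
  calc μ (ball x (6 * r)) ≤ μ (ball x (2 * (2 * (2 * r)))) :=
        measure_mono (ball_subset_ball (by linarith))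
    _ ≤ c * μ (ball x (2 * (2 * r))) := h.doubling _ _ (by positivity)
    _ ≤ c * (c * μ (ball x (2 * r))) := by gcongr; exact h.doubling _ _ (by positivity)
    _ ≤ c * (c * (c * μ (ball x r))) := by gcongr; exact h.doubling _ _ hr
    _ = (c : ℝ≥0∞) ^ 3 * μ (ball x r) := by ring
    _ ≤ _ := by gcongr; exact ball_subset_closedBall

variable [BorelSpace T] [CompactSpace T] {μ : Measure T} {c P : ℝ≥0} {lP : ℝ}

/-- The map `f` has, at `x` and at all small scales, oscillation controlled by the integral of
the weight `w`. -/
def OscControlled (μ : Measure T) (f : T → UnitAddCircle) (w : T → ℝ≥0∞) (x : T) : Prop :=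
  ∃ r₀ > (0 : ℝ), ∀ r, 0 < r → r ≤ r₀ → ∃ M : ℝ≥0,
    (∀ y ∈ ball x (6 * r), dist (f y) (f x) ≤ M * (6 * r)) ∧
      M * μ (closedBall x r) ≤ ∫⁻ y in closedBall x r, w y ∂μ

lemma DoublingPoincare.exists_majorant_codimPre [Nonempty T] (h : DoublingPoincare μ c P lP)
    {f : T → UnitAddCircle} {A : Set T} (hA : MeasurableSet A) {w : T → ℝ≥0∞}
    (hfin : ∫⁻ x, w x ∂μ ≠ ⊤) (hP : ∀ x ∈ A, OscControlled μ f w x) {δ : ℝ} (hδ : 0 < δ) :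
    ∃ G : UnitAddCircle → ℝ≥0∞, Measurable G ∧ (∀ t, codimPre μ δ (f ⁻¹' {t} ∩ A) ≤ G t) ∧
      ∫⁻ t, G t ≤ 2 * c ^ 3 * (∫⁻ x in A, w x ∂μ + ENNReal.ofReal δ) := by
  classical
  have : IsFiniteMeasure (μ.withDensity w) := isFiniteMeasure_withDensity hfin
  obtain ⟨U, hAU, hU, hUm⟩ := A.exists_isOpen_le_add (μ.withDensity w)
    (ε := ENNReal.ofReal δ) (by simpa using hδ)
  rw [withDensity_apply _ hU.measurableSet, withDensity_apply _ hA] at hUm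
  have hex : ∀ x ∈ A, ∃ r : ℝ, ∃ M : ℝ≥0, 0 < r ∧ 6 * r ≤ δ ∧ closedBall x r ⊆ U ∧
      (∀ y ∈ ball x (6 * r), dist (f y) (f x) ≤ M * (6 * r)) ∧
      M * μ (closedBall x r) ≤ ∫⁻ y in closedBall x r, w y ∂μ := by
    intro x hx
    obtain ⟨r₀, hr₀, hr⟩ := hP x hx
    obtain ⟨r₁, hr₁, hr₁U⟩ := nhds_basis_closedBall.mem_iff.1 (hU.mem_nhds (hAU hx))
    obtain ⟨M, hM⟩ := hr (min r₀ (min r₁ (δ / 6))) (by positivity) (min_le_left _ _)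
    refine ⟨min r₀ (min r₁ (δ / 6)), M, by positivity, ?_, ?_, hM⟩
    · have : min r₀ (min r₁ (δ / 6)) ≤ δ / 6 := (min_le_right _ _).trans (min_le_right _ _)
      linarith
    · exact (closedBall_subset_closedBall
        ((min_le_right _ _).trans (min_le_left _ _))).trans hr₁U
  choose! r M hr0 hrδ hrU hosc hM using hex
  obtain ⟨u, huA, hdisj, hcov⟩ := Vitali.exists_disjoint_subfamily_covering_enlargement_closedBall
    A id r δ (fun x hx => by linarith [hr0 x hx, hrδ x hx]) 5 (by norm_num)
  have hucount : u.Countable := hdisj.countable_of_nonempty_interior fun x hx =>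
    (nonempty_ball.2 (hr0 x (huA hx))).mono ball_subset_interior_closedBall
  have : Countable u := hucount.to_subtype
  let S : u → Set UnitAddCircle := fun b => closedBall (f b) (M b * (6 * r b))
  let a : u → ℝ≥0∞ := fun b => μ (ball (b : T) (6 * r b)) / ENNReal.ofReal (6 * r b)
  have hS : ∀ b, MeasurableSet (S b) := fun b => measurableSet_closedBall
  refine ⟨fun t => ∑' b : u, (S b).indicator (fun _ => a b) t,
    Measurable.tsum fun b => measurable_const.indicator (hS b), fun t => ?_, ?_⟩
  · refine (codimPre_le_tsum μ hδ.le (fun b : u => (b : T))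
      (fun b : u => if t ∈ S b then 6 * r b else 0) (fun b => ?_) ?_).trans_eq ?_
    · split_ifs
      · exact hrδ b (huA b.2)
      · exact hδ.le
    · rintro x ⟨rfl, hx⟩
      obtain ⟨b, hb, hsub⟩ := hcov x hx
      have hrb := hr0 b (huA hb)
      have hxb : x ∈ ball b (6 * r b) :=
        closedBall_subset_ball (by linarith) (hsub (mem_closedBall_self (hr0 x hx).le))
      refine mem_iUnion.2 ⟨⟨b, hb⟩, ?_⟩
      rwa [if_pos]
      exact hosc b (huA hb) x hxb
    · refine tsum_congr fun b => ?_
      by_cases ht : t ∈ S b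
      · simp [ht, a]
      · simp [ht]
  · rw [lintegral_tsum fun b => (measurable_const.indicator (hS b)).aemeasurable]
    calc ∑' b : u, ∫⁻ t, (S b).indicator (fun _ => a b) t
        ≤ ∑' b : u, 2 * c ^ 3 * ∫⁻ y in closedBall (b : T) (r b), w y ∂μ := by
          refine ENNReal.tsum_le_tsum fun b => ?_
          have hrb := hr0 b (huA b.2)
          have h6 : ENNReal.ofReal (6 * r b) ≠ 0 := by simpa using hrb
          have hvol : volume (S b) ≤ ENNReal.ofReal (6 * r b) * (2 * M b) := by
            rw [AddCircle.volume_closedBall]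
            refine (ENNReal.ofReal_le_ofReal (min_le_right _ _)).trans_eq ?_
            rw [show 2 * ((M b : ℝ) * (6 * r b)) = (6 * r b) * ((2 * M b : ℝ≥0) : ℝ) by
              push_cast; ring, ENNReal.ofReal_mul (by positivity), ENNReal.ofReal_coe_nnreal]
            push_cast
            rfl
          rw [lintegral_indicator_const (hS b)]
          calc a b * volume (S b) ≤ a b * (ENNReal.ofReal (6 * r b) * (2 * M b)) := by gcongr
            _ = μ (ball (b : T) (6 * r b)) * (2 * M b) := by
              rw [← mul_assoc, ENNReal.div_mul_cancel h6 ENNReal.ofReal_ne_top]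
            _ ≤ (c ^ 3 * μ (closedBall (b : T) (r b))) * (2 * M b) := by
              gcongr
              exact h.measure_ball_six_mul_le _ hrb
            _ = 2 * c ^ 3 * (M b * μ (closedBall (b : T) (r b))) := by ring
            _ ≤ _ := by gcongr; exact hM b (huA b.2)
      _ = 2 * c ^ 3 * ∫⁻ y in ⋃ b : u, closedBall (b : T) (r b), w y ∂μ := by
          rw [ENNReal.tsum_mul_left, lintegral_iUnion (fun b => measurableSet_closedBall)]
          exact (hdisj.subtype _ _)
      _ ≤ 2 * c ^ 3 * ∫⁻ y in U, w y ∂μ := by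
          gcongr
          exact iUnion_subset fun b => hrU b (huA b.2)
      _ ≤ _ := by gcongr

/-- An Eilenberg type inequality for the codimension one Hausdorff measure of level sets. -/
lemma DoublingPoincare.upperLintegral_codimH_le_of_oscControlled [Nonempty T] [IsFiniteMeasure μ]
    (h : DoublingPoincare μ c P lP)
    {f : T → UnitAddCircle} {A : Set T} (hA : MeasurableSet A) {w : T → ℝ≥0∞}
    (hfin : ∫⁻ x, w x ∂μ ≠ ⊤) (hP : ∀ x ∈ A, OscControlled μ f w x) :
    upperLintegral volume (fun t => codimH μ (f ⁻¹' {t} ∩ A)) ≤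
      2 * c ^ 3 * ∫⁻ x in A, w x ∂μ := by
  have hpos : ∀ n : ℕ, (0 : ℝ) < 1 / ((n : ℝ) + 1) := fun n => Nat.one_div_pos_of_nat
  choose G hGm hGle hGint using fun n : ℕ => h.exists_majorant_codimPre hA hfin hP (hpos n)
  have hle : ∀ t, codimH μ (f ⁻¹' {t} ∩ A) ≤ liminf (fun n => G n t) atTop := by
    refine fun t => iSup₂_le fun δ hδ => ?_
    refine le_liminf_of_le (by isBoundedDefault) ?_
    filter_upwards [tendsto_one_div_add_atTop_nhds_zero_nat.eventually (ge_mem_nhds hδ)] with n hn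
    exact (codimPre_anti μ hn _).trans (hGle n t)
  · refine (iInf₂_le _ ⟨Measurable.liminf hGm, hle⟩).trans ?_
    refine (lintegral_liminf_le hGm).trans ((liminf_le_liminf (Eventually.of_forall hGint)
      (by isBoundedDefault) (by isBoundedDefault)).trans_eq (Tendsto.liminf_eq ?_))
    have h1 : Tendsto (fun n : ℕ => ENNReal.ofReal (1 / ((n : ℝ) + 1))) atTop (𝓝 0) := by
      simpa using ENNReal.tendsto_ofReal tendsto_one_div_add_atTop_nhds_zero_nat
    have h2 := (tendsto_const_nhds (x := ∫⁻ x in A, w x ∂μ)).add h1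
    rw [add_zero] at h2
    exact ENNReal.Tendsto.const_mul h2 (Or.inr (by finiteness))

end Eilenberg

section UpperIntegral

variable {Y : Type*} [MeasurableSpace Y] (ν : Measure Y)

lemma exists_measurable_majorant (F : Y → ℝ≥0∞) :
    ∃ G : Y → ℝ≥0∞, Measurable G ∧ (∀ y, F y ≤ G y) ∧ ∫⁻ y, G y ∂ν ≤ upperLintegral ν F := by
  by_cases htop : upperLintegral ν F = ⊤
  · exact ⟨fun _ => ⊤, measurable_const, fun _ => le_top, by simp [htop]⟩
  have hex : ∀ n : ℕ, ∃ G : Y → ℝ≥0∞, (Measurable G ∧ ∀ y, F y ≤ G y) ∧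
      ∫⁻ y, G y ∂ν < upperLintegral ν F + (n : ℝ≥0∞)⁻¹ := fun n => by
    have h := ENNReal.lt_add_right htop (ENNReal.inv_ne_zero.2 (ENNReal.natCast_ne_top n))
    obtain ⟨G, hG⟩ := iInf_lt_iff.1 h
    obtain ⟨hG', hlt⟩ := iInf_lt_iff.1 hG
    exact ⟨G, hG', hlt⟩
  choose G hG hlt using hex
  refine ⟨fun y => ⨅ n, G n y, Measurable.iInf fun n => (hG n).1,
    fun y => le_iInf fun n => (hG n).2 y, ?_⟩
  have hlim : Tendsto (fun n : ℕ => upperLintegral ν F + (n : ℝ≥0∞)⁻¹) atTop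
      (𝓝 (upperLintegral ν F)) := by
    simpa using tendsto_const_nhds.add ENNReal.tendsto_inv_nat_nhds_zero
  exact ge_of_tendsto' hlim fun n =>
    (lintegral_mono fun y => iInf_le (fun n => G n y) n).trans (hlt n).le

lemma upperLintegral_mono {F G : Y → ℝ≥0∞} (h : ∀ y, F y ≤ G y) :
    upperLintegral ν F ≤ upperLintegral ν G :=
  le_iInf₂ fun H hH => iInf₂_le H ⟨hH.1, fun y => (h y).trans (hH.2 y)⟩

lemma upperLintegral_tsum_const_mul_le {ι : Type*} [Countable ι] (a : ι → ℝ≥0∞)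
    (F : ι → Y → ℝ≥0∞) :
    upperLintegral ν (fun y => ∑' i, a i * F i y) ≤ ∑' i, a i * upperLintegral ν (F i) := by
  choose G hGm hGle hGint using fun i => exists_measurable_majorant ν (F i)
  calc upperLintegral ν (fun y => ∑' i, a i * F i y)
      ≤ ∫⁻ y, ∑' i, a i * G i y ∂ν :=
        iInf₂_le _ ⟨Measurable.tsum fun i => (hGm i).const_mul _,
          fun y => ENNReal.tsum_le_tsum fun i => by gcongr; exact hGle i y⟩
    _ = ∑' i, a i * ∫⁻ y, G i y ∂ν := by
        rw [lintegral_tsum fun i => ((hGm i).const_mul _).aemeasurable]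
        exact tsum_congr fun i => lintegral_const_mul _ (hGm i)
    _ ≤ _ := ENNReal.tsum_le_tsum fun i => by gcongr; exact hGint i

end UpperIntegral

lemma tsum_indicator_two_zpow_le (a : ℝ≥0∞) :
    ∑' k : ℤ, (if ENNReal.ofReal (2 ^ k) < a then ENNReal.ofReal (2 ^ k) else 0) ≤ 2 * a := by
  rcases eq_or_ne a ⊤ with rfl | ha
  · simp
  set E : ℤ → Set ℝ := fun k =>
    if ENNReal.ofReal (2 ^ k) < a then Ioc (2 ^ (k - 1)) (2 ^ k) else ∅ with hE
  have hEsub : ∀ k, E k ⊆ Ioc (2 ^ (k - 1)) (2 ^ k) := fun k => by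
    rw [hE]
    dsimp only
    split_ifs <;> simp
  have hlt : ∀ i j, i < j → Disjoint (E i) (E j) := fun i j hij =>
    (Set.Ioc_disjoint_Ioc_of_le (zpow_le_zpow_right₀ one_le_two (by omega))).mono
      (hEsub i) (hEsub j)
  have hdisj : Pairwise (Function.onFun Disjoint E) := fun i j hij =>
    (lt_or_gt_of_ne hij).elim (hlt i j) fun h => (hlt j i h).symm
  have hmeas : ∀ k, MeasurableSet (E k) := fun k => by
    rw [hE]
    dsimp only
    split_ifs
    exacts [measurableSet_Ioc, MeasurableSet.empty]
  have hterm : ∀ k : ℤ, (if ENNReal.ofReal (2 ^ k) < a then ENNReal.ofReal (2 ^ k) else 0) =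
      2 * volume (E k) := fun k => by
    rw [hE]
    dsimp only
    split_ifs
    · rw [Real.volume_Ioc, show (2 : ℝ≥0∞) = ENNReal.ofReal 2 by simp,
        ← ENNReal.ofReal_mul zero_le_two, zpow_sub_one₀ two_ne_zero]
      congr 1
      ring
    · simp
  have hsub : ⋃ k, E k ⊆ Ioc 0 a.toReal := by
    refine iUnion_subset fun k => ?_
    rw [hE]
    dsimp only
    split_ifs with hk
    · refine Ioc_subset_Ioc (by positivity) ?_
      exact (ENNReal.ofReal_le_iff_le_toReal ha).1 hk.le
    · exact empty_subset _
  simp_rw [hterm]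
  rw [ENNReal.tsum_mul_left, ← measure_iUnion hdisj hmeas]
  gcongr
  refine (measure_mono hsub).trans ?_
  rw [Real.volume_Ioc, sub_zero]
  exact ENNReal.ofReal_toReal_le

section Coarea

variable {T : Type*} [MetricSpace T] [MeasurableSpace T] {μ : Measure T}

lemma codimH_mono (μ : Measure T) {A B : Set T} (hAB : A ⊆ B) : codimH μ A ≤ codimH μ B := by
  refine iSup₂_mono fun δ _ => le_iInf₂ fun c r => le_iInf₂ fun hr hB => ?_
  exact (iInf₂_le c r).trans (iInf₂_le hr (hAB.trans hB))

lemma choquetIntegral_le_tsum (μ : Measure T) (S : Set T) (g : T → ℝ≥0∞) :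
    choquetIntegral μ S g ≤ ∑' k : ℤ, ENNReal.ofReal (2 ^ k) *
      codimH μ (S ∩ {x | ENNReal.ofReal (2 ^ k) < g x}) := by
  have hcov : Ioi (0 : ℝ) ⊆ ⋃ k : ℤ, Ioc (2 ^ k) (2 ^ (k + 1)) := fun s hs => by
    obtain ⟨k, hk⟩ := exists_mem_Ioc_zpow (mem_Ioi.1 hs) one_lt_two
    exact mem_iUnion.2 ⟨k, hk⟩
  refine (lintegral_mono_set hcov).trans ((lintegral_iUnion_le _ _).trans
    (ENNReal.tsum_le_tsum fun k => ?_))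
  have hvol : volume (Ioc ((2 : ℝ) ^ k) (2 ^ (k + 1))) = ENNReal.ofReal (2 ^ k) := by
    rw [Real.volume_Ioc, zpow_add_one₀ two_ne_zero]
    congr 1
    ring
  calc ∫⁻ s in Ioc ((2 : ℝ) ^ k) (2 ^ (k + 1)), codimH μ {x | x ∈ S ∧ ENNReal.ofReal s < g x}
      ≤ ∫⁻ _ in Ioc ((2 : ℝ) ^ k) (2 ^ (k + 1)),
          codimH μ (S ∩ {x | ENNReal.ofReal (2 ^ k) < g x}) := by
        refine setLIntegral_mono measurable_const fun s hs => codimH_mono μ ?_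
        rintro x ⟨hx, hsx⟩
        exact ⟨hx, (ENNReal.ofReal_le_ofReal hs.1.le).trans_lt hsx⟩
    _ = _ := by rw [setLIntegral_const, hvol, mul_comm]

variable [BorelSpace T] [CompactSpace T] [IsFiniteMeasure μ] {c P : ℝ≥0} {lP : ℝ}

/-- The constant in the coarea inequality. -/
def coareaConst (c P : ℝ≥0) : ℝ≥0 := 2 * c ^ 3 * oscConst c P

/-- The coarea inequality for level sets of a Lipschitz map to the circle. -/
lemma DoublingPoincare.upperLintegral_codimH_le [Nonempty T] (h : DoublingPoincare μ c P lP)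
    {f : T → UnitAddCircle} {L : ℝ≥0} (hf : LipschitzWith L f) {ρ : T → ℝ≥0∞}
    (hρ : Measurable ρ) (hg : IsUpperGradient f ρ) (hfin : ∫⁻ x, ρ x ∂μ ≠ ⊤) {A : Set T}
    (hA : MeasurableSet A) :
    upperLintegral volume (fun t => codimH μ (f ⁻¹' {t} ∩ A)) ≤
      coareaConst c P * ∫⁻ x in A, ρ x ∂μ := by
  set K := oscConst c P with hK
  obtain ⟨N, hN⟩ : ∃ N : Set T, N = {x | ¬ ∀ η : ℝ≥0, 0 < η → ∃ r₀ > (0 : ℝ), ∀ r, 0 < r →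
      r ≤ r₀ → ∃ M : ℝ≥0, (∀ y ∈ ball x (6 * r), dist (f y) (f x) ≤ M * (6 * r)) ∧
        M * μ (closedBall x r) ≤ ∫⁻ y in closedBall x r, K * (ρ y + η) ∂μ} := ⟨_, rfl⟩
  have hN0 : μ N = 0 := by
    rw [hN]
    exact h.ae_oscillation_le hf hρ hg hfin
  refine ENNReal.le_of_forall_pos_le_add fun ε hε _ => ?_
  set X : ℝ≥0 := 2 * c ^ 3 * (K * (μ univ).toNNReal + L) with hX
  set η : ℝ≥0 := ε / (X + 1) with hη
  have hη0 : 0 < η := by positivity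
  have hXη : X * η ≤ ε := by
    rw [hη, ← mul_div_assoc]
    refine div_le_of_le_mul₀ (by positivity) (by positivity) ?_
    rw [mul_comm]
    gcongr
    exact le_self_add
  obtain ⟨V, hNV, hV, hVm⟩ := N.exists_isOpen_le_add μ (ε := (η : ℝ≥0∞)) (by simpa using hη0.ne')
  rw [hN0, zero_add] at hVm
  set w : T → ℝ≥0∞ := fun x => K * (ρ x + η) + V.indicator (fun _ => (L : ℝ≥0∞)) x with hw
  have hwint : ∀ B : Set T, ∫⁻ x in B, w x ∂μ ≤
      K * (∫⁻ x in B, ρ x ∂μ) + (K * (μ univ).toNNReal + L) * η := fun B => by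
    rw [hw, lintegral_add_left ((hρ.add_const _).const_mul _),
      lintegral_const_mul _ (hρ.add_const _), lintegral_add_right _ measurable_const,
      setLIntegral_const, ENNReal.coe_toNNReal (measure_ne_top _ _), mul_add]
    have e1 : (K : ℝ≥0∞) * (η * μ B) ≤ K * (η * μ univ) := by
      gcongr
      exact subset_univ _
    have e2 : ∫⁻ x in B, V.indicator (fun _ => (L : ℝ≥0∞)) x ∂μ ≤ L * η :=
      calc ∫⁻ x in B, V.indicator (fun _ => (L : ℝ≥0∞)) x ∂μ
          ≤ ∫⁻ x, V.indicator (fun _ => (L : ℝ≥0∞)) x ∂μ := setLIntegral_le_lintegral _ _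
        _ = L * μ V := lintegral_indicator_const hV.measurableSet _
        _ ≤ _ := by gcongr
    calc _ ≤ K * (∫⁻ x in B, ρ x ∂μ) + K * (η * μ univ) + L * η :=
          add_le_add (add_le_add le_rfl e1) e2
      _ = _ := by ring
  have hP : ∀ x ∈ A, OscControlled μ f w x := by
    intro x _
    by_cases hx : x ∈ N
    · obtain ⟨r₁, hr₁, hr₁V⟩ := nhds_basis_closedBall.mem_iff.1 (hV.mem_nhds (hNV hx))
      refine ⟨r₁, hr₁, fun r hr hrr => ⟨L, fun y hy => ?_, ?_⟩⟩
      · refine (hf.dist_le_mul y x).trans ?_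
        gcongr
        exact (mem_ball.1 hy).le
      · rw [← setLIntegral_const]
        refine setLIntegral_mono' measurableSet_closedBall fun y hy => ?_
        rw [hw]
        simp [indicator_of_mem (hr₁V (closedBall_subset_closedBall hrr hy))]
    · rw [hN, mem_ofPred_eq, not_not] at hx
      obtain ⟨r₀, hr₀, hr⟩ := hx η hη0
      refine ⟨r₀, hr₀, fun r h0 h1 => ?_⟩
      obtain ⟨M, hM, hM'⟩ := hr r h0 h1
      exact ⟨M, hM, hM'.trans (lintegral_mono fun y => le_self_add)⟩
  have hwfin : ∫⁻ x, w x ∂μ ≠ ⊤ := by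
    have := hwint univ
    rw [setLIntegral_univ, setLIntegral_univ] at this
    exact ne_top_of_le_ne_top (by finiteness) this
  refine (h.upperLintegral_codimH_le_of_oscControlled hA hwfin hP).trans ?_
  calc 2 * c ^ 3 * ∫⁻ x in A, w x ∂μ
      ≤ 2 * c ^ 3 * (K * (∫⁻ x in A, ρ x ∂μ) + (K * (μ univ).toNNReal + L) * η) := by
        gcongr
        exact hwint A
    _ = coareaConst c P * (∫⁻ x in A, ρ x ∂μ) + (X * η : ℝ≥0) := by
        rw [coareaConst, hX]
        push_cast
        ring
    _ ≤ _ := by gcongr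

/-- The coarea inequality for Choquet integrals over level sets. -/
lemma DoublingPoincare.upperLintegral_choquetIntegral_le [Nonempty T]
    (h : DoublingPoincare μ c P lP) {f : T → UnitAddCircle} {L : ℝ≥0} (hf : LipschitzWith L f)
    {ρ : T → ℝ≥0∞} (hρ : Measurable ρ) (hg : IsUpperGradient f ρ) (hfin : ∫⁻ x, ρ x ∂μ ≠ ⊤)
    {g : T → ℝ≥0∞} (hgm : Measurable g) :
    upperLintegral volume (fun t => choquetIntegral μ (f ⁻¹' {t}) g) ≤
      2 * coareaConst c P * ∫⁻ x, g x * ρ x ∂μ := by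
  have hA : ∀ k : ℤ, MeasurableSet {x | ENNReal.ofReal (2 ^ k) < g x} := fun k =>
    measurableSet_lt measurable_const hgm
  calc upperLintegral volume (fun t => choquetIntegral μ (f ⁻¹' {t}) g)
      ≤ ∑' k : ℤ, ENNReal.ofReal (2 ^ k) * upperLintegral volume fun t =>
          codimH μ (f ⁻¹' {t} ∩ {x | ENNReal.ofReal (2 ^ k) < g x}) :=
        (upperLintegral_mono _ fun t => choquetIntegral_le_tsum μ _ g).trans
          (upperLintegral_tsum_const_mul_le _ _ _)
    _ ≤ ∑' k : ℤ, ENNReal.ofReal (2 ^ k) *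
          (coareaConst c P * ∫⁻ x in {x | ENNReal.ofReal (2 ^ k) < g x}, ρ x ∂μ) :=
        ENNReal.tsum_le_tsum fun k => by
          gcongr
          exact h.upperLintegral_codimH_le hf hρ hg hfin (hA k)
    _ = coareaConst c P * ∫⁻ x, ∑' k : ℤ,
          (if ENNReal.ofReal (2 ^ k) < g x then ENNReal.ofReal (2 ^ k) else 0) * ρ x ∂μ := by
        have hm : ∀ k : ℤ, Measurable fun x =>
            (if ENNReal.ofReal (2 ^ k) < g x then ENNReal.ofReal (2 ^ k) else 0) * ρ x :=
          fun k => (Measurable.ite (hA k) measurable_const measurable_const).mul hρ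
        rw [lintegral_tsum fun k => (hm k).aemeasurable, ← ENNReal.tsum_mul_left]
        refine tsum_congr fun k => ?_
        rw [mul_left_comm, ← lintegral_indicator (hA k), ← lintegral_const_mul _
          (hρ.indicator (hA k))]
        congr 2 with x
        by_cases hx : ENNReal.ofReal (2 ^ k) < g x
        · simp [hx]
        · simp [hx]
    _ ≤ coareaConst c P * ∫⁻ x, 2 * g x * ρ x ∂μ := by
        gcongr with x
        rw [ENNReal.tsum_mul_right]
        gcongr
        exact tsum_indicator_two_zpow_le (g x)
    _ = _ := by
        simp_rw [mul_assoc]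
        rw [lintegral_const_mul _ (show Measurable fun x => g x * ρ x from hgm.mul hρ)]
        ring

end Coarea

section UpperGradients

lemma LipschitzWith.isUpperGradient {T Y : Type*} [PseudoMetricSpace T] [PseudoEMetricSpace Y]
    {u : T → Y} {L : ℝ≥0} (hu : LipschitzWith L u) : IsUpperGradient u fun _ => (L : ℝ≥0∞) := fun γ => by
  calc edist (u γ.start) (u γ.finish) ≤ L * edist γ.start γ.finish := hu _ _
    _ ≤ L * edist γ.a γ.b := by
        gcongr
        simpa [UPath.start, UPath.finish] using γ.lip (left_mem_Icc.2 γ.hab) (right_mem_Icc.2 γ.hab)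
    _ = _ := by
        rw [UPath.integral, setLIntegral_const, Real.volume_Icc, edist_comm, edist_dist,
          Real.dist_eq, abs_of_nonneg (sub_nonneg.2 γ.hab)]

lemma lintegral_ne_top_of_lintegral_rpow_ne_top {T : Type*} [MeasurableSpace T] {μ : Measure T}
    [IsFiniteMeasure μ] {p : ℝ} (hp : 1 ≤ p) {ρ : T → ℝ≥0∞} (h : ∫⁻ x, ρ x ^ p ∂μ ≠ ⊤) : ∫⁻ x, ρ x ∂μ ≠ ⊤ := by
  refine ne_top_of_le_ne_top (b := ∫⁻ x, 1 + ρ x ^ p ∂μ) ?_ (lintegral_mono fun x => ?_)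
  · rw [lintegral_add_left measurable_const, lintegral_const, one_mul]
    finiteness
  · rcases le_total (ρ x) 1 with hx | hx
    · exact hx.trans le_self_add
    · refine le_trans ?_ le_add_self
      simpa using ENNReal.rpow_le_rpow_of_exponent_le hx hp

variable {T : Type*} [PseudoMetricSpace T] [MeasurableSpace T] {μ : Measure T} {p : ℝ}

lemma exists_integral_eq_top_of_pathMod_eq_zero (hp : 0 < p) {Γ : Set (UPath T)}
    (hΓ : pathMod μ p Γ = 0) {ε : ℝ≥0∞} (hε : ε ≠ 0) :
    ∃ h : T → ℝ≥0∞, Measurable h ∧ (∀ γ ∈ Γ, γ.integral h = ⊤) ∧ ∫⁻ x, h x ^ p ∂μ ≤ ε := by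
  obtain ⟨ε', hε'0, hε'⟩ := ENNReal.exists_pos_sum_of_countable' hε ℕ
  have hex : ∀ n : ℕ, ∃ h : T → ℝ≥0∞, (Measurable h ∧ ∀ γ ∈ Γ, 1 ≤ γ.integral h) ∧
      ∫⁻ x, h x ^ p ∂μ < ε' n / ((n : ℝ≥0∞) ^ p) := fun n => by
    have hpos : pathMod μ p Γ < ε' n / ((n : ℝ≥0∞) ^ p) := by
      rw [hΓ]
      exact ENNReal.div_pos (hε'0 n).ne' (ENNReal.rpow_ne_top_of_nonneg hp.le (by simp))
    obtain ⟨h, hh⟩ := iInf_lt_iff.1 hpos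
    obtain ⟨hh', hlt⟩ := iInf_lt_iff.1 hh
    exact ⟨h, hh', hlt⟩
  choose h hh hlt using hex
  refine ⟨fun x => ⨆ n : ℕ, n * h n x, Measurable.iSup fun n => (hh n).1.const_mul _,
    fun γ hγ => ?_, ?_⟩
  · refine ENNReal.eq_top_of_forall_nnreal_le fun r => ?_
    obtain ⟨n, hn⟩ := exists_nat_ge r
    calc (r : ℝ≥0∞) ≤ n * 1 := by rw [mul_one]; exact_mod_cast hn
      _ ≤ n * γ.integral (h n) := by gcongr; exact (hh n).2 γ hγ
      _ ≤ γ.integral fun x => n * h n x := lintegral_const_mul_le _ _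
      _ ≤ _ := lintegral_mono fun t => le_iSup (fun n : ℕ => n * h n (γ.toFun t)) n
  · calc ∫⁻ x, (⨆ n : ℕ, n * h n x) ^ p ∂μ ≤ ∫⁻ x, ∑' n : ℕ, (n * h n x) ^ p ∂μ := by
          refine lintegral_mono fun x => ?_
          rw [← ENNReal.le_rpow_inv_iff hp]
          refine iSup_le fun n => ?_
          rw [ENNReal.le_rpow_inv_iff hp]
          exact ENNReal.le_tsum n
      _ = ∑' n : ℕ, (n : ℝ≥0∞) ^ p * ∫⁻ x, h n x ^ p ∂μ := by
          rw [lintegral_tsum fun n => (((hh n).1.const_mul _).pow_const p).aemeasurable]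
          refine tsum_congr fun n => ?_
          simp_rw [ENNReal.mul_rpow_of_nonneg _ _ hp.le]
          exact lintegral_const_mul _ ((hh n).1.pow_const p)
      _ ≤ ∑' n, ε' n := ENNReal.tsum_le_tsum fun n =>
          (mul_le_mul_right (hlt n).le _).trans ENNReal.mul_div_le
      _ ≤ ε := hε'.le

/-- A weak upper gradient can be replaced by an upper gradient of almost the same energy. -/
lemma IsWeakUpperGradient.exists_isUpperGradient (hp : 0 < p) {Y : Type*} [PseudoEMetricSpace Y]
    {u : T → Y} {ρ : T → ℝ≥0∞} (hρ : Measurable ρ) (h : IsWeakUpperGradient μ p u ρ)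
    {ε : ℝ≥0∞} (hε : ε ≠ 0) :
    ∃ ρ' : T → ℝ≥0∞, Measurable ρ' ∧ IsUpperGradient u ρ' ∧
      ∫⁻ x, ρ' x ^ p ∂μ ≤ ∫⁻ x, ρ x ^ p ∂μ + ε := by
  obtain ⟨g, hg, hgtop, hgε⟩ := exists_integral_eq_top_of_pathMod_eq_zero hp h hε
  refine ⟨fun x => max (ρ x) (g x), hρ.max hg, fun γ => ?_, ?_⟩
  · by_cases hγ : edist (u γ.start) (u γ.finish) ≤ γ.integral ρ
    · exact hγ.trans (lintegral_mono fun t => le_max_left _ _)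
    · have h1 : γ.integral g ≤ γ.integral fun x => max (ρ x) (g x) :=
        lintegral_mono fun t => le_max_right _ _
      rw [hgtop γ hγ, top_le_iff] at h1
      exact h1 ▸ le_top
  · calc ∫⁻ x, max (ρ x) (g x) ^ p ∂μ ≤ ∫⁻ x, ρ x ^ p + g x ^ p ∂μ := by
          refine lintegral_mono fun x => ?_
          rcases le_total (ρ x) (g x) with hx | hx
          · rw [max_eq_right hx]
            exact le_add_self
          · rw [max_eq_left hx]
            exact le_self_add
      _ = ∫⁻ x, ρ x ^ p ∂μ + ∫⁻ x, g x ^ p ∂μ := lintegral_add_left (hρ.pow_const p) _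
      _ ≤ _ := by gcongr

lemma IsUpperGradient.isWeakUpperGradient {Y : Type*} [PseudoEMetricSpace Y] (hp : 0 < p)
    {u : T → Y} {ρ : T → ℝ≥0∞} (h : IsUpperGradient u ρ) : IsWeakUpperGradient μ p u ρ := by
  refine nonpos_iff_eq_zero.1 ((iInf₂_le (fun _ => 0)
    ⟨measurable_const, fun γ hγ => absurd (h γ) hγ⟩).trans ?_)
  simp [hp]

end UpperGradients

section Degree

variable {T : Type*} [TopologicalSpace T] {x₀ : T} {α₀ : Path x₀ x₀}

lemma HasDegree.sub_const {f : T → UnitAddCircle} {k : ℤ} (h : HasDegree x₀ α₀ f k)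
    (t : UnitAddCircle) : HasDegree x₀ α₀ (fun x => f x - t) k := by
  obtain ⟨hf, hdeg⟩ := h
  refine ⟨hf.sub continuous_const, fun x γ hγ => ?_⟩
  have hcont : Continuous fun y : UnitAddCircle => y - t := continuous_id.sub continuous_const
  have hloop : stdLoop k (f x - t) = (stdLoop k (f x)).map hcont :=
    Path.ext (funext fun s => add_sub_right_comm (f x) _ t |>.symm)
  change Path.Homotopic _ (stdLoop k (f x - t))
  rw [hloop]
  exact (hdeg x γ hγ).map ⟨_, hcont⟩

lemma IsGenerator.nontrivial (h : IsGenerator x₀ α₀) : Nontrivial T := by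
  by_contra hT
  rw [not_nontrivial_iff_subsingleton] at hT
  have hpath : ∀ γ γ' : Path x₀ x₀, γ = γ' := fun γ γ' => by
    ext s
    exact Subsingleton.elim _ _
  have h01 := @h.1 0 1
  simp only [zpow_zero, zpow_one] at h01
  refine zero_ne_one (h01 ?_)
  exact congrArg (fun γ : Path x₀ x₀ => FundamentalGroup.fromPath (X := TopCat.of T) ⟦γ⟧)
    (hpath (Path.refl x₀) α₀)

end Degree

section Duality

variable {T : Type*} [MetricSpace T] [MeasurableSpace T] {μ : Measure T} {x₀ : T}
  {α₀ : Path x₀ x₀}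

lemma cap_ne_top [IsFiniteMeasure μ] {p : ℝ} (hp : 0 < p) {f : T → UnitAddCircle}
    (hf : DegOneLip x₀ α₀ f) : cap μ p x₀ α₀ ≠ ⊤ := by
  obtain ⟨L, hL⟩ := hf.1
  refine ne_top_of_le_ne_top ?_ ((iInf₂_le f hf).trans (iInf₂_le (fun _ => (L : ℝ≥0∞))
    ⟨measurable_const, (LipschitzWith.isUpperGradient hL).isWeakUpperGradient hp⟩))
  rw [lintegral_const]
  exact ENNReal.mul_ne_top (ENNReal.rpow_ne_top_of_nonneg hp.le (by simp)) (measure_ne_top _ _)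

lemma exists_isUpperGradient_of_cap_lt {p : ℝ} (hp : 0 < p) {b : ℝ≥0∞}
    (hb : cap μ p x₀ α₀ < b) : ∃ f : T → UnitAddCircle, DegOneLip x₀ α₀ f ∧
      ∃ ρ : T → ℝ≥0∞, Measurable ρ ∧ IsUpperGradient f ρ ∧ ∫⁻ x, ρ x ^ p ∂μ ≤ b := by
  simp only [cap, iInf_lt_iff] at hb
  obtain ⟨f, hf, ρ, ⟨hρ, hw⟩, hlt⟩ := hb
  obtain ⟨ρ', hρ', hug, hle⟩ := hw.exists_isUpperGradient hp hρ (tsub_pos_of_lt hlt).ne'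
  exact ⟨f, hf, ρ', hρ', hug, hle.trans_eq (add_tsub_cancel_of_le hlt.le)⟩

lemma isDoubling_const_ne_top [Nontrivial T] [CompactSpace T] {Cμ : ℝ≥0∞}
    (h : IsDoubling μ Cμ) (hpos : ∀ (x : T) (r : ℝ), 0 < r → 0 < μ (ball x r)) : Cμ ≠ ⊤ := by
  rintro rfl
  obtain ⟨x⟩ : Nonempty T := inferInstance
  have hd : 0 < diam (univ : Set T) :=
    diam_pos nontrivial_univ isCompact_univ.isBounded
  have := (h x (diam (univ : Set T) / 2) (by positivity) (by linarith)).2.2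
  rw [ENNReal.top_mul (hpos _ _ (by positivity)).ne'] at this
  exact lt_irrefl _ this

lemma SupportsPoincare.isFiniteMeasure [Nonempty T] [CompactSpace T] {CP lP : ℝ}
    (h : SupportsPoincare μ CP lP) : IsFiniteMeasure μ := by
  obtain ⟨x⟩ : Nonempty T := inferInstance
  refine ⟨(measure_mono fun y _ => ?_).trans_lt
    (h.1 x (diam (univ : Set T) + 1) (by positivity)).2⟩
  exact mem_ball.2 ((dist_le_diam_of_mem isCompact_univ.isBounded (mem_univ y)
    (mem_univ x)).trans_lt (lt_add_one _))

lemma doublingPoincare_of_isDoubling [Nontrivial T] [CompactSpace T] [BorelSpace T] {Cμ : ℝ≥0∞}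
    {CP lP : ℝ} (hD : IsDoubling μ Cμ) (hP : SupportsPoincare μ CP lP) :
    DoublingPoincare μ Cμ.toNNReal CP.toNNReal lP := by
  have := hP.isFiniteMeasure
  have hd : 0 < diam (univ : Set T) :=
    diam_pos nontrivial_univ isCompact_univ.isBounded
  have hC := isDoubling_const_ne_top hD fun x r hr => (hP.1 x r hr).1
  refine ⟨fun x r hr => (hP.1 x r hr).1, fun x r hr => ?_, fun u ρ hu hρ hug x r hr => ?_⟩
  · rw [ENNReal.coe_toNNReal hC]
    rcases lt_or_ge r (diam (univ : Set T)) with h | h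
    · exact (hD x r hr h).2.1
    · set s := 3 / 4 * diam (univ : Set T) with hs
      calc μ (ball x (2 * r)) ≤ μ (ball x (2 * s)) := measure_mono fun y _ =>
            mem_ball.2 ((dist_le_diam_of_mem isCompact_univ.isBounded (mem_univ y)
              (mem_univ x)).trans_lt (by linarith))
        _ ≤ Cμ * μ (ball x s) := (hD x s (by positivity) (by linarith)).2.1
        _ ≤ Cμ * μ (ball x r) := by
            gcongr
            linarith
  · refine (hP.2 u ρ hu.locallyIntegrable hρ hug x r hr).trans ?_
    gcongr ENNReal.ofReal ?_ * _
    have h1 : CP * diam (ball x r) ≤ CP.toNNReal * diam (ball x r) := by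
      gcongr
      exact Real.le_coe_toNNReal CP
    have h2 : (CP.toNNReal : ℝ) * diam (ball x r) ≤ CP.toNNReal * (2 * r) := by
      gcongr
      exact diam_ball hr.le
    linarith

/-- The lower bound against a single competitor for each of the two sides. -/
lemma DoublingPoincare.one_le_mul_rpow_mul_rpow [BorelSpace T] [CompactSpace T]
    [IsFiniteMeasure μ] {c P : ℝ≥0} {lP : ℝ} (h : DoublingPoincare μ c P lP) {p q : ℝ}
    (hpq : p.HolderConjugate q) {f : T → UnitAddCircle} (hf : DegOneLip x₀ α₀ f)
    {ρ : T → ℝ≥0∞} (hρ : Measurable ρ) (hug : IsUpperGradient f ρ)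
    (hfin : ∫⁻ x, ρ x ^ p ∂μ ≠ ⊤) {g : T → ℝ≥0∞} (hg : Measurable g)
    (hadm : ∀ S ∈ Surfaces μ x₀ α₀, 1 ≤ choquetIntegral μ S g) :
    1 ≤ (2 * coareaConst c P : ℝ≥0) *
      ((∫⁻ x, ρ x ^ p ∂μ) ^ (1 / p) * (∫⁻ x, g x ^ q ∂μ) ^ (1 / q)) := by
  have : Nonempty T := ⟨x₀⟩
  obtain ⟨⟨L, hL⟩, hdeg⟩ := hf
  have hfin1 := lintegral_ne_top_of_lintegral_rpow_ne_top hpq.lt.le hfin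
  obtain ⟨F, hF, hFle, hFint⟩ := exists_measurable_majorant (volume : Measure UnitAddCircle)
    fun t => codimH μ (f ⁻¹' {t} ∩ univ)
  obtain ⟨G, hG, hGle, hGint⟩ := exists_measurable_majorant (volume : Measure UnitAddCircle)
    fun t => choquetIntegral μ (f ⁻¹' {t}) g
  have hFtop : ∫⁻ t, F t ≠ ⊤ := by
    refine ne_top_of_le_ne_top ?_
      (hFint.trans (h.upperLintegral_codimH_le hL hρ hug hfin1 MeasurableSet.univ))
    rw [setLIntegral_univ]
    finiteness
  have hG1 : ∀ᵐ t, 1 ≤ G t := by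
    filter_upwards [ae_lt_top hF hFtop] with t ht
    refine (hadm _ ⟨fun x => f x - t, hdeg.sub_const t, ?_, ?_⟩).trans (hGle t)
    · ext x
      simp [sub_eq_zero]
    · have := (hFle t).trans_lt ht
      rwa [inter_univ] at this
  calc (1 : ℝ≥0∞) = ∫⁻ _ : UnitAddCircle, 1 := by simp
    _ ≤ ∫⁻ t, G t := lintegral_mono_ae hG1
    _ ≤ 2 * coareaConst c P * ∫⁻ x, g x * ρ x ∂μ :=
        hGint.trans (h.upperLintegral_choquetIntegral_le hL hρ hug hfin1 hg)
    _ ≤ (2 * coareaConst c P : ℝ≥0) *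
        ((∫⁻ x, ρ x ^ p ∂μ) ^ (1 / p) * (∫⁻ x, g x ^ q ∂μ) ^ (1 / q)) := by
        push_cast
        gcongr
        simp_rw [mul_comm (g _)]
        exact ENNReal.lintegral_mul_le_Lp_mul_Lq μ hpq hρ.aemeasurable hg.aemeasurable

/-- The lower bound against a single competitor for the surface modulus. -/
lemma DoublingPoincare.one_le_mul_cap_rpow_mul_rpow [BorelSpace T] [CompactSpace T]
    [IsFiniteMeasure μ] {c P : ℝ≥0} {lP : ℝ} (h : DoublingPoincare μ c P lP) {p q : ℝ}
    (hpq : p.HolderConjugate q) {f : T → UnitAddCircle} (hf : DegOneLip x₀ α₀ f)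
    {g : T → ℝ≥0∞} (hg : Measurable g)
    (hadm : ∀ S ∈ Surfaces μ x₀ α₀, 1 ≤ choquetIntegral μ S g)
    (hgfin : ∫⁻ x, g x ^ q ∂μ ≠ ⊤) :
    1 ≤ (2 * coareaConst c P : ℝ≥0) *
      (cap μ p x₀ α₀ ^ (1 / p) * (∫⁻ x, g x ^ q ∂μ) ^ (1 / q)) := by
  set B := (∫⁻ x, g x ^ q ∂μ) ^ (1 / q) with hB
  have hBtop : B ≠ ⊤ := ENNReal.rpow_ne_top_of_nonneg (by simpa using hpq.symm.pos.le) hgfin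
  have hcap := cap_ne_top (μ := μ) hpq.pos hf
  have hlim : Tendsto (fun n : ℕ => ((2 * coareaConst c P : ℝ≥0) : ℝ≥0∞) *
      ((cap μ p x₀ α₀ + (n : ℝ≥0∞)⁻¹) ^ (1 / p) * B)) atTop
      (𝓝 ((2 * coareaConst c P : ℝ≥0) * (cap μ p x₀ α₀ ^ (1 / p) * B))) := by
    refine ENNReal.Tendsto.const_mul (ENNReal.Tendsto.mul_const ?_ (Or.inr hBtop))
      (Or.inr ENNReal.coe_ne_top)
    refine (ENNReal.continuous_rpow_const.tendsto _).comp ?_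
    simpa using tendsto_const_nhds.add ENNReal.tendsto_inv_nat_nhds_zero
  refine ge_of_tendsto hlim ((eventually_ne_atTop 0).mono fun n hn => ?_)
  have hn' : (n : ℝ≥0∞)⁻¹ ≠ ⊤ := by simpa using hn
  obtain ⟨f', hf', ρ, hρ, hug, hle⟩ := exists_isUpperGradient_of_cap_lt hpq.pos
    (ENNReal.lt_add_right hcap (ENNReal.inv_ne_zero.2 (ENNReal.natCast_ne_top n)))
  refine (h.one_le_mul_rpow_mul_rpow hpq hf' hρ hug
    (ne_top_of_le_ne_top (by finiteness) hle) hg hadm).trans ?_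
  gcongr
  simpa using hpq.pos.le

end Duality

end Duality

open Duality in
/-- **Theorem 2.2 (lower bound).** -/
theorem statement1 (Cμ : ℝ≥0∞) (CP lP : ℝ) :
    ∃ C : ℝ≥0∞, 0 < C ∧ C < ⊤ ∧
      ∀ (T : Type) [MetricSpace T] [MeasurableSpace T] [BorelSpace T] [CompactSpace T]
        (μ : Measure T) (x₀ : T) (α₀ : Path x₀ x₀),
        Standing μ Cμ CP lP x₀ α₀ →
        ∀ p : ℝ, 1 < p →
          (0 < cap μ p x₀ α₀ →
            C⁻¹ ≤ cap μ p x₀ α₀ ^ (1 / p) *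
                surfMod μ (p / (p - 1)) x₀ α₀ ^ (1 / (p / (p - 1)))) ∧
          (cap μ p x₀ α₀ = 0 → surfMod μ (p / (p - 1)) x₀ α₀ = ⊤) := by
  set C : ℝ≥0 := 1 + 2 * coareaConst Cμ.toNNReal CP.toNNReal with hC
  have hC0 : 0 < C := by positivity
  refine ⟨C, by exact_mod_cast hC0, ENNReal.coe_lt_top, ?_⟩
  intro T _ _ _ _ μ x₀ α₀ hT p hp
  obtain ⟨hD, hP, -, hgen, f, hf⟩ := hT
  have := hgen.nontrivial
  have := hP.isFiniteMeasure
  have hpq : p.HolderConjugate (p / (p - 1)) := Real.HolderConjugate.conjExponent hp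
  set q := p / (p - 1)
  have hq := hpq.symm.pos
  have key : ∀ g : T → ℝ≥0∞, Measurable g →
      (∀ S ∈ Surfaces μ x₀ α₀, 1 ≤ choquetIntegral μ S g) → ∫⁻ x, g x ^ q ∂μ ≠ ⊤ →
      1 ≤ C * (cap μ p x₀ α₀ ^ (1 / p) * (∫⁻ x, g x ^ q ∂μ) ^ (1 / q)) := fun g hg hadm hfin => by
    refine ((doublingPoincare_of_isDoubling hD hP).one_le_mul_cap_rpow_mul_rpow hpq hf hg hadm
      hfin).trans ?_
    gcongr
    exact le_add_self
  constructor
  · intro hcap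
    have hcaptop := cap_ne_top (μ := μ) hpq.pos hf
    set D := (C : ℝ≥0∞) * cap μ p x₀ α₀ ^ (1 / p) with hDdef
    have hC0' : (C : ℝ≥0∞) ≠ 0 := by exact_mod_cast hC0.ne'
    have hD0 : D ≠ 0 := mul_ne_zero hC0' (ENNReal.rpow_pos hcap hcaptop).ne'
    have hDtop : D ≠ ⊤ := ENNReal.mul_ne_top ENNReal.coe_ne_top
      (ENNReal.rpow_ne_top_of_nonneg (by simpa using hpq.pos.le) hcaptop)
    have hmod : (D⁻¹) ^ q ≤ surfMod μ q x₀ α₀ := le_iInf₂ fun g hg => by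
      by_cases hfin : ∫⁻ x, g x ^ q ∂μ = ⊤
      · exact hfin ▸ le_top
      · have h1 := key g hg.1 hg.2 hfin
        rw [← mul_assoc, ← hDdef] at h1
        rw [← ENNReal.le_rpow_inv_iff hq, ← one_div q,
          ENNReal.inv_le_iff_le_mul (fun _ => hD0) (fun h => absurd h hDtop)]
        exact h1
    have h2 : D⁻¹ ≤ surfMod μ q x₀ α₀ ^ (1 / q) := by
      rwa [one_div, ENNReal.le_rpow_inv_iff hq]
    rw [ENNReal.inv_le_iff_le_mul (fun _ => hC0') (fun h => absurd h ENNReal.coe_ne_top),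
      ← mul_assoc, ← hDdef]
    rwa [ENNReal.inv_le_iff_le_mul (fun _ => hD0) (fun h => absurd h hDtop)] at h2
  · intro hcap
    refine top_le_iff.1 (le_iInf₂ fun g hg => top_le_iff.2 ?_)
    by_contra hfin
    have h1 := key g hg.1 hg.2 hfin
    rw [hcap, ENNReal.zero_rpow_of_pos (by simpa using hpq.pos), zero_mul, mul_zero] at h1
    exact absurd h1 (by simp)
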